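/- Let n ≥ 1 and let Q and Q′ be real normal defining functions of dimension n, defining hypersurfaces M and M′ with complexifications ℳ and ℳ′. Assume M is finitely nondegenerate at 0, and let ℋ = (f,g,f̃,g̃) be an HSPM sending (ℳ,0) into (ℳ′,0). Then at least one of the following holds: (i) ℋ is transversally null (g ≡ 0 and g̃ ≡ 0 near 0) and Q′(f(z,w), f̃(χ,τ), 0) = 0 for all (z,w) and (χ,τ) near 0; or (ii) ∂g/∂w(0,0) ≠ 0, det(∂f/∂z(0,0)) ≠ 0 and det(∂f̃/∂χ(0,0)) ≠ 0 — so that the Jacobians of (f,g) and of (f̃,g̃) at the origin are invertible and ℋ is a biholomorphism near 0 — and moreover M′ is finitely nondegenerate at 0. -/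

import Mathlib

open Filter Topology Complex

namespace HSPMpaper

variable {n : ℕ}

/-- Partial derivative of `F` in the `i`-th coordinate direction. -/
noncomputable def pd (i : Fin n) (F : (Fin n → ℂ) → ℂ) : (Fin n → ℂ) → ℂ :=
  fun z => fderiv ℂ F z (Pi.single i 1)

/-- Iterated partial derivative `∂^α` for a multi-index `α`. -/
noncomputable def mpd (α : Fin n → ℕ) (F : (Fin n → ℂ) → ℂ) : (Fin n → ℂ) → ℂ :=
  ((List.ofFn fun i : Fin n => (pd i)^[α i]).foldr (· ∘ ·) id) F

/-- Componentwise complex conjugation on `ℂⁿ`. -/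
def conjV (z : Fin n → ℂ) : Fin n → ℂ := fun i => starRingEnd ℂ (z i)

/-- The conjugate defining function `Q̄(χ,z,τ) = conj (Q (conj χ) (conj z) (conj τ))`. -/
def QBar (Q : (Fin n → ℂ) → (Fin n → ℂ) → ℂ → ℂ) : (Fin n → ℂ) → (Fin n → ℂ) → ℂ → ℂ :=
  fun χ z τ => starRingEnd ℂ (Q (conjV χ) (conjV z) (starRingEnd ℂ τ))

/-- `Q` is a normal defining function (of dimension `n`): holomorphic near the origin of
`ℂⁿ × ℂⁿ × ℂ` and satisfying `Q(0,χ,τ) = τ` and `Q(z,0,τ) = τ` near `0`. -/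
def IsNormalDF (Q : (Fin n → ℂ) → (Fin n → ℂ) → ℂ → ℂ) : Prop :=
  (∀ᶠ p in 𝓝 (0 : (Fin n → ℂ) × (Fin n → ℂ) × ℂ),
      AnalyticAt ℂ (fun q : (Fin n → ℂ) × (Fin n → ℂ) × ℂ => Q q.1 q.2.1 q.2.2) p) ∧
  (∀ᶠ p in 𝓝 (0 : (Fin n → ℂ) × (Fin n → ℂ) × ℂ),
      Q 0 p.2.1 p.2.2 = p.2.2 ∧ Q p.1 0 p.2.2 = p.2.2)

/-- `Q` is a real normal defining function: normal and `Q(z,χ,Q̄(χ,z,w)) = w` near `0`. -/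
def IsRealNormalDF (Q : (Fin n → ℂ) → (Fin n → ℂ) → ℂ → ℂ) : Prop :=
  IsNormalDF Q ∧
  ∀ᶠ p in 𝓝 (0 : (Fin n → ℂ) × (Fin n → ℂ) × ℂ),
    Q p.1 p.2.1 (QBar Q p.2.1 p.1 p.2.2) = p.2.2

/-- `(f,g,f̃,g̃)` is a holomorphic Segre preserving map sending `(ℳ,0)` into `(ℳ',0)`. -/
def IsHSPM (Q Q' : (Fin n → ℂ) → (Fin n → ℂ) → ℂ → ℂ)
    (f : (Fin n → ℂ) → ℂ → Fin n → ℂ) (g : (Fin n → ℂ) → ℂ → ℂ)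
    (ft : (Fin n → ℂ) → ℂ → Fin n → ℂ) (gt : (Fin n → ℂ) → ℂ → ℂ) : Prop :=
  (∀ᶠ p in 𝓝 (0 : (Fin n → ℂ) × ℂ), AnalyticAt ℂ (fun q : (Fin n → ℂ) × ℂ => f q.1 q.2) p) ∧
  (∀ᶠ p in 𝓝 (0 : (Fin n → ℂ) × ℂ), AnalyticAt ℂ (fun q : (Fin n → ℂ) × ℂ => g q.1 q.2) p) ∧
  (∀ᶠ p in 𝓝 (0 : (Fin n → ℂ) × ℂ), AnalyticAt ℂ (fun q : (Fin n → ℂ) × ℂ => ft q.1 q.2) p) ∧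
  (∀ᶠ p in 𝓝 (0 : (Fin n → ℂ) × ℂ), AnalyticAt ℂ (fun q : (Fin n → ℂ) × ℂ => gt q.1 q.2) p) ∧
  f 0 0 = 0 ∧ g 0 0 = 0 ∧ ft 0 0 = 0 ∧ gt 0 0 = 0 ∧
  ∀ᶠ p in 𝓝 (0 : (Fin n → ℂ) × (Fin n → ℂ) × ℂ),
    g p.1 (Q p.1 p.2.1 p.2.2) =
      Q' (f p.1 (Q p.1 p.2.1 p.2.2)) (ft p.2.1 p.2.2) (gt p.2.1 p.2.2)

/-- `M` is of finite type at `0`: `(z,χ) ↦ Q(z,χ,0)` does not vanish identically near `0`. -/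
def FiniteType (Q : (Fin n → ℂ) → (Fin n → ℂ) → ℂ → ℂ) : Prop :=
  ¬ ∀ᶠ p in 𝓝 (0 : (Fin n → ℂ) × (Fin n → ℂ)), Q p.1 p.2 0 = 0

/-- Jacobian matrix of `z ↦ f(z,0)` at `z`. -/
noncomputable def jacz (f : (Fin n → ℂ) → ℂ → Fin n → ℂ) (z : Fin n → ℂ) :
    Matrix (Fin n) (Fin n) ℂ :=
  Matrix.of fun i j => pd j (fun z' => f z' 0 i) z

/-- `ℋ` is Segre transversal to `ℳ'` at `0`: `∂g/∂w(0,0) ≠ 0`. -/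
noncomputable def SegreTransversal (g : (Fin n → ℂ) → ℂ → ℂ) : Prop :=
  deriv (fun w => g 0 w) 0 ≠ 0

/-- `ℋ` is totally Segre nondegenerate at `0`. -/
def TotallySegreNondeg (f ft : (Fin n → ℂ) → ℂ → Fin n → ℂ) : Prop :=
  (¬ ∀ᶠ z in 𝓝 (0 : Fin n → ℂ), (jacz f z).det = 0) ∧
  (¬ ∀ᶠ χ in 𝓝 (0 : Fin n → ℂ), (jacz ft χ).det = 0)

/-- `ℋ` is transversally null: `g ≡ 0` and `g̃ ≡ 0` near `0`. -/
def TransversallyNull (g gt : (Fin n → ℂ) → ℂ → ℂ) : Prop :=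
  (∀ᶠ p in 𝓝 (0 : (Fin n → ℂ) × ℂ), g p.1 p.2 = 0) ∧
  (∀ᶠ p in 𝓝 (0 : (Fin n → ℂ) × ℂ), gt p.1 p.2 = 0)

/-- The `k`-th coordinate direction in `ℂⁿ × ℂ`. -/
noncomputable def dirCT (n : ℕ) (k : Fin (n + 1)) : (Fin n → ℂ) × ℂ :=
  if h : (k : ℕ) < n then (Pi.single ⟨k, h⟩ 1, 0) else (0, 1)

/-- `M` is holomorphically nondegenerate at `0`: for some `K`, the map
`(χ,τ) ↦ (∂_z^α Q(0,χ,τ))_{|α| ≤ K}` has generic rank `n+1`. -/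
def HolNondeg (Q : (Fin n → ℂ) → (Fin n → ℂ) → ℂ → ℂ) : Prop :=
  ∃ K : ℕ, ∃ A : Fin (n + 1) → Fin n → ℕ, (∀ j, (∑ i, A j i) ≤ K) ∧
    ¬ ∀ᶠ p in 𝓝 (0 : (Fin n → ℂ) × ℂ),
      (Matrix.of fun j k : Fin (n + 1) =>
        fderiv ℂ (fun q : (Fin n → ℂ) × ℂ => mpd (A j) (fun z => Q z q.1 q.2) 0) p
          (dirCT n k)).det = 0

/-- `M` is of class `𝒞` at `0`: for some `K`, the map
`χ ↦ (∂_z^α Q(0,χ,0))_{|α| ≤ K}` has generic rank `n`. -/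
def ClassC (Q : (Fin n → ℂ) → (Fin n → ℂ) → ℂ → ℂ) : Prop :=
  ∃ K : ℕ, ∃ A : Fin n → Fin n → ℕ, (∀ j, (∑ i, A j i) ≤ K) ∧
    ¬ ∀ᶠ χ in 𝓝 (0 : Fin n → ℂ),
      (Matrix.of fun j k : Fin n =>
        pd k (fun χ' => mpd (A j) (fun z => Q z χ' 0) 0) χ).det = 0

/-- `M` is finitely nondegenerate at `0`: for some `K`, the vectors
`∂_χ ∂_z^α Q(0,0,0)`, `|α| ≤ K`, span `ℂⁿ`. -/
def FinNondeg (Q : (Fin n → ℂ) → (Fin n → ℂ) → ℂ → ℂ) : Prop :=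
  ∃ K : ℕ, Submodule.span ℂ
    {v : Fin n → ℂ | ∃ α : Fin n → ℕ, (∑ i, α i) ≤ K ∧
      v = fun i => pd i (fun χ => mpd α (fun z => Q z χ 0) 0) 0} = ⊤

/-- Full Jacobian matrix of `(z,w) ↦ (f(z,w), g(z,w))` at `p ∈ ℂⁿ × ℂ`. -/
noncomputable def jacFull (f : (Fin n → ℂ) → ℂ → Fin n → ℂ) (g : (Fin n → ℂ) → ℂ → ℂ)
    (p : (Fin n → ℂ) × ℂ) : Matrix (Fin (n + 1)) (Fin (n + 1)) ℂ :=
  Matrix.of fun i k =>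
    fderiv ℂ (fun q : (Fin n → ℂ) × ℂ => (Fin.snoc (f q.1 q.2) (g q.1 q.2) : Fin (n + 1) → ℂ) i) p (dirCT n k)

/-- The degree-`d` homogeneous term of the Taylor series of `φ` at `0`. -/
noncomputable def homogTerm (d : ℕ) (φ : (Fin n → ℂ) → ℂ) : (Fin n → ℂ) → ℂ :=
  fun z => iteratedFDeriv ℂ d φ 0 (fun _ => z) / (d.factorial : ℂ)

/-- The order of vanishing of `φ` at `0`. -/
noncomputable def vanishOrder (φ : (Fin n → ℂ) → ℂ) : ℕ :=
  sInf {d | homogTerm d φ ≠ 0}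

section Calculus

variable {X Y : Type*} [NormedAddCommGroup X] [NormedSpace ℂ X]
  [NormedAddCommGroup Y] [NormedSpace ℂ Y]

/-- The derivative of `F` in the constant direction `v`. -/
noncomputable def dirDeriv (v : X) (F : X → Y) : X → Y := fun x => fderiv ℂ F x v

theorem _root_.AnalyticOnNhd.dirDeriv [CompleteSpace Y] {F : X → Y} {U : Set X}
    (hF : AnalyticOnNhd ℂ F U) (v : X) :
    AnalyticOnNhd ℂ (dirDeriv v F) U :=
  fun x hx => ((ContinuousLinearMap.apply ℂ Y v).analyticAt _).comp (hF x hx).fderiv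

theorem _root_.AnalyticOnNhd.iterate_dirDeriv [CompleteSpace Y] {F : X → Y} {U : Set X}
    (hF : AnalyticOnNhd ℂ F U)
    (v : X) (j : ℕ) : AnalyticOnNhd ℂ ((HSPMpaper.dirDeriv v)^[j] F) U := by
  induction j with
  | zero => exact hF
  | succ j ih => rw [Function.iterate_succ_apply']; exact ih.dirDeriv v

theorem dirDeriv_congr {F G : X → Y} {U : Set X} (hU : IsOpen U) (h : Set.EqOn F G U) (v : X) :
    Set.EqOn (dirDeriv v F) (dirDeriv v G) U := fun x hx => by
  have : F =ᶠ[𝓝 x] G := h.eventuallyEq_of_mem (hU.mem_nhds hx)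
  simp only [dirDeriv, this.fderiv_eq]

theorem fderiv_dirDeriv [CompleteSpace Y] {F : X → Y} {x : X} (hF : AnalyticAt ℂ F x) (v : X) :
    fderiv ℂ (dirDeriv v F) x = dirDeriv v (fderiv ℂ F) x := by
  have hs := (hF.contDiffAt (n := ⊤)).isSymmSndFDerivAt_of_omega
  ext u
  have h := fderiv_clm_apply hF.fderiv.differentiableAt (differentiableAt_const (c := v) (x := x))
  change fderiv ℂ (fun y => (fderiv ℂ F y) v) x u = _
  rw [h]
  simpa [dirDeriv] using hs u v

theorem dirDeriv_comm [CompleteSpace Y] {F : X → Y} {x : X} (hF : AnalyticAt ℂ F x) (u v : X) :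
    dirDeriv u (dirDeriv v F) x = dirDeriv v (dirDeriv u F) x := by
  have hs := (hF.contDiffAt (n := ⊤)).isSymmSndFDerivAt_of_omega
  change fderiv ℂ (dirDeriv v F) x u = fderiv ℂ (dirDeriv u F) x v
  rw [fderiv_dirDeriv hF, fderiv_dirDeriv hF]
  exact hs v u

theorem fderiv_iterate_dirDeriv [CompleteSpace Y] {F : X → Y} {U : Set X} (hU : IsOpen U)
    (hF : AnalyticOnNhd ℂ F U) (v : X) (j : ℕ) :
    Set.EqOn (fderiv ℂ ((dirDeriv v)^[j] F)) ((dirDeriv v)^[j] (fderiv ℂ F)) U := by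
  induction j with
  | zero => exact fun _ _ => rfl
  | succ j ih =>
    intro x hx
    rw [Function.iterate_succ_apply', Function.iterate_succ_apply',
      fderiv_dirDeriv (hF.iterate_dirDeriv v j x hx)]
    exact dirDeriv_congr hU ih v hx

theorem iteratedDeriv_line [CompleteSpace Y] {F : X → Y} {U : Set X}
    (hU : IsOpen U) (hF : AnalyticOnNhd ℂ F U)
    (x v : X) (j : ℕ) (t : ℂ) (ht : x + t • v ∈ U) :
    iteratedDeriv j (fun s : ℂ => F (x + s • v)) t = (dirDeriv v)^[j] F (x + t • v) := by
  induction j generalizing t with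
  | zero => simp
  | succ j ih =>
    rw [iteratedDeriv_succ, Function.iterate_succ_apply']
    have hT : ∀ᶠ s : ℂ in 𝓝 t, x + s • v ∈ U :=
      (by fun_prop : ContinuousAt (fun s : ℂ => x + s • v) t).eventually_mem (hU.mem_nhds ht)
    have h1 : iteratedDeriv j (fun s : ℂ => F (x + s • v)) =ᶠ[𝓝 t]
        fun s => (dirDeriv v)^[j] F (x + s • v) := hT.mono fun s hs => ih s hs
    rw [h1.deriv_eq]
    have h2 : HasDerivAt (fun s : ℂ => x + s • v) v t := by
      simpa using ((hasDerivAt_id t).smul_const v).const_add x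
    exact ((hF.iterate_dirDeriv v j _ ht).differentiableAt.hasFDerivAt.comp_hasDerivAt t h2).deriv

theorem analyticAt_line {F : X → Y} {x v : X} {t : ℂ} (hF : AnalyticAt ℂ F (x + t • v)) :
    AnalyticAt ℂ (fun s : ℂ => F (x + s • v)) t := by
  have : AnalyticAt ℂ (fun s : ℂ => x + s • v) t := by fun_prop
  exact hF.comp_of_eq this rfl

theorem eq_zero_of_iterate_dirDeriv_eq_zero [CompleteSpace Y] {F : X → Y} {U : Set X} (hU : IsOpen U)
    (hc : Convex ℝ U) (hF : AnalyticOnNhd ℂ F U) {x v : X} (hx : x ∈ U)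
    (h : ∀ j, (dirDeriv v)^[j] F x = 0) {t : ℂ} (ht : x + t • v ∈ U) : F (x + t • v) = 0 := by
  set T : Set ℂ := (fun s : ℂ => x + s • v) ⁻¹' U
  have hT : Convex ℝ T := by
    intro a ha b hb p q hp hq hpq
    have : x + (p • a + q • b) • v = p • (x + a • v) + q • (x + b • v) := by
      rw [smul_add, smul_add, add_add_add_comm, ← add_smul, hpq, one_smul, add_smul,
        smul_assoc, smul_assoc]
    change x + (p • a + q • b) • v ∈ U
    rw [this]
    exact hc ha hb hp hq hpq
  have hA : AnalyticOnNhd ℂ (fun s : ℂ => F (x + s • v)) T := fun s hs => analyticAt_line (hF _ hs)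
  have h0 : (0 : ℂ) ∈ T := by simpa [T] using hx
  have hz : ∀ᶠ s in 𝓝 (0 : ℂ), F (x + s • v) = 0 := by
    rw [← analyticOrderAt_eq_top]
    refine ENat.eq_top_iff_forall_ge.2 fun m => ?_
    rw [natCast_le_analyticOrderAt_iff_iteratedDeriv_eq_zero (hA 0 h0)]
    intro i _
    rw [iteratedDeriv_line hU hF x v i 0 h0]
    simpa using h i
  exact hA.eqOn_zero_of_preconnected_of_eventuallyEq_zero hT.isPreconnected h0 hz ht

theorem exists_eq_pow_smul_of_iterate_dirDeriv [CompleteSpace Y] {F : X → Y} {U : Set X} (hU : IsOpen U)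
    (hF : AnalyticOnNhd ℂ F U) {x v : X} (hx : x ∈ U) {m : ℕ}
    (h : ∀ j < m, (dirDeriv v)^[j] F x = 0) :
    ∃ G : ℂ → Y, AnalyticAt ℂ G 0 ∧ (∀ᶠ t in 𝓝 (0 : ℂ), F (x + t • v) = t ^ m • G t) ∧
      ((dirDeriv v)^[m] F x ≠ 0 → G 0 ≠ 0) := by
  have hx' : x + (0 : ℂ) • v ∈ U := by simpa using hx
  have hA : AnalyticAt ℂ (fun s : ℂ => F (x + s • v)) 0 := analyticAt_line (hF _ hx')
  have hd : ∀ j, iteratedDeriv j (fun s : ℂ => F (x + s • v)) 0 = (dirDeriv v)^[j] F x :=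
    fun j => by rw [iteratedDeriv_line hU hF x v j 0 hx']; simp
  by_cases hm : (dirDeriv v)^[m] F x = 0
  · have := (natCast_le_analyticOrderAt_iff_iteratedDeriv_eq_zero (n := m) hA).2
      fun i hi => by rw [hd, h i hi]
    obtain ⟨G, hG, hG'⟩ := (natCast_le_analyticOrderAt hA).1 this
    exact ⟨G, hG, by simpa using hG', fun h => absurd hm h⟩
  · have := (analyticOrderAt_eq_nat_iff_iteratedDeriv_eq_zero hA (n := m)).2
      ⟨fun i hi => by rw [hd, h i hi], by rwa [hd]⟩
    obtain ⟨G, hG, hG0, hG'⟩ := hA.analyticOrderAt_eq_natCast.1 this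
    exact ⟨G, hG, by simpa using hG', fun _ => hG0⟩

theorem eqOn_zero_of_eventually_mul_eq_zero {a b : X → ℂ} {U : Set X} (hU : IsOpen U)
    (hc : Convex ℝ U) (ha : AnalyticOnNhd ℂ a U) (hb : ContinuousOn b U)
    (hab : ∀ x ∈ U, a x * b x = 0) (hb0 : ∃ x ∈ U, b x ≠ 0) : ∀ x ∈ U, a x = 0 := by
  obtain ⟨x, hx, hbx⟩ := hb0
  refine ha.eqOn_zero_of_preconnected_of_eventuallyEq_zero hc.isPreconnected hx ?_
  filter_upwards [hU.mem_nhds hx,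
    (hb.continuousAt (hU.mem_nhds hx)).eventually_ne hbx] with y hy hby
  exact (mul_eq_zero.1 (hab y hy)).resolve_right hby

end Calculus

section IteratedPartials

variable {ι X X' Y : Type*} [NormedAddCommGroup X] [NormedSpace ℂ X]
  [NormedAddCommGroup X'] [NormedSpace ℂ X'] [NormedAddCommGroup Y] [NormedSpace ℂ Y]

/-- Iterated directional derivatives `∂_{e i₁}^{α i₁} ⋯ ∂_{e iₘ}^{α iₘ}` along `[i₁, …, iₘ]`. -/
noncomputable def iterDir (e : ι → X) : List ι → (ι → ℕ) → (X → Y) → X → Y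
  | [], _, F => F
  | i :: l, α, F => (dirDeriv (e i))^[α i] (iterDir e l α F)

theorem mpd_eq_iterDir (α : Fin n → ℕ) (F : (Fin n → ℂ) → ℂ) :
    mpd α F = iterDir (fun i => (Pi.single i 1 : Fin n → ℂ)) (List.finRange n) α F := by
  rw [mpd, List.ofFn_eq_map]
  induction List.finRange n with
  | nil => rfl
  | cons i l ih =>
    simp only [List.map_cons, List.foldr_cons, Function.comp_apply, iterDir]
    rw [ih]
    rfl

theorem iterDir_analyticOnNhd [CompleteSpace Y] {F : X → Y} {U : Set X}
    (hF : AnalyticOnNhd ℂ F U) (e : ι → X) (l : List ι) (α : ι → ℕ) :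
    AnalyticOnNhd ℂ (iterDir e l α F) U := by
  induction l with
  | nil => exact hF
  | cons i l ih => exact ih.iterate_dirDeriv _ _

theorem iterate_dirDeriv_congr {F G : X → Y} {U : Set X} (hU : IsOpen U) (h : Set.EqOn F G U)
    (v : X) (j : ℕ) : Set.EqOn ((dirDeriv v)^[j] F) ((dirDeriv v)^[j] G) U := by
  induction j with
  | zero => exact h
  | succ j ih =>
    rw [Function.iterate_succ_apply', Function.iterate_succ_apply']
    exact dirDeriv_congr hU ih v

theorem iterDir_congr {F G : X → Y} {U : Set X} (hU : IsOpen U) (h : Set.EqOn F G U)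
    (e : ι → X) (l : List ι) (α : ι → ℕ) : Set.EqOn (iterDir e l α F) (iterDir e l α G) U := by
  induction l with
  | nil => exact h
  | cons i l ih => exact iterate_dirDeriv_congr hU ih _ _

theorem dirDeriv_iterate_comm [CompleteSpace Y] {F : X → Y} {U : Set X} (hU : IsOpen U)
    (hF : AnalyticOnNhd ℂ F U) (u v : X) (j : ℕ) :
    Set.EqOn (dirDeriv v ((dirDeriv u)^[j] F)) ((dirDeriv u)^[j] (dirDeriv v F)) U := by
  induction j with
  | zero => exact fun _ _ => rfl
  | succ j ih =>
    intro x hx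
    rw [Function.iterate_succ_apply', Function.iterate_succ_apply',
      dirDeriv_comm (hF.iterate_dirDeriv u j x hx)]
    exact dirDeriv_congr hU ih u hx

theorem dirDeriv_iterDir_comm [CompleteSpace Y] {F : X → Y} {U : Set X} (hU : IsOpen U)
    (hF : AnalyticOnNhd ℂ F U) (v : X) (e : ι → X) (l : List ι) (α : ι → ℕ) :
    Set.EqOn (dirDeriv v (iterDir e l α F)) (iterDir e l α (dirDeriv v F)) U := by
  induction l with
  | nil => exact fun _ _ => rfl
  | cons i l ih =>
    exact (dirDeriv_iterate_comm hU (iterDir_analyticOnNhd hF e l α) (e i) v (α i)).trans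
      (iterate_dirDeriv_congr hU ih _ _)

theorem iterate_dirDeriv_comp_affine [CompleteSpace Y] {F : X → Y} {U : Set X} (hU : IsOpen U)
    (hF : AnalyticOnNhd ℂ F U) (L : X' →L[ℂ] X) (c : X) (v : X') (j : ℕ) :
    Set.EqOn ((dirDeriv v)^[j] fun x => F (L x + c))
      (fun x => (dirDeriv (L v))^[j] F (L x + c)) ((fun x => L x + c) ⁻¹' U) := by
  induction j with
  | zero => exact fun _ _ => rfl
  | succ j ih =>
    intro x hx
    have hU' : IsOpen ((fun x => L x + c) ⁻¹' U) := hU.preimage (by fun_prop)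
    rw [Function.iterate_succ_apply', dirDeriv_congr hU' ih v hx]
    simp only [Function.iterate_succ_apply']
    have h1 := (hF.iterate_dirDeriv (L v) j _ hx).differentiableAt.hasFDerivAt
    have h2 : HasFDerivAt (fun x => L x + c) L x := L.hasFDerivAt.add_const c
    exact DFunLike.congr_fun (h1.comp x h2).fderiv v

theorem iterDir_comp_affine [CompleteSpace Y] {F : X → Y} {U : Set X} (hU : IsOpen U)
    (hF : AnalyticOnNhd ℂ F U) (L : X' →L[ℂ] X) (c : X) (e : ι → X') (l : List ι) (α : ι → ℕ) :
    Set.EqOn (iterDir e l α fun x => F (L x + c))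
      (fun x => iterDir (fun i => L (e i)) l α F (L x + c)) ((fun x => L x + c) ⁻¹' U) := by
  induction l with
  | nil => exact fun _ _ => rfl
  | cons i l ih =>
    exact (iterate_dirDeriv_congr (hU.preimage (by fun_prop)) ih _ _).trans
      (iterate_dirDeriv_comp_affine hU (iterDir_analyticOnNhd hF _ l α) L c (e i) (α i))

theorem iterDir_zero (e : ι → X) (l : List ι) (α : ι → ℕ) :
    iterDir e l α (fun _ => (0 : Y)) = fun _ => 0 := by
  induction l with
  | nil => rfl
  | cons i l ih =>
    rw [iterDir, ih]
    refine Function.iterate_fixed ?_ _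
    funext x
    simp [dirDeriv]

theorem iterDir_update_of_notMem [DecidableEq ι] (e : ι → X) {l : List ι} {i : ι} (hi : i ∉ l)
    (α : ι → ℕ) (a : ℕ) (F : X → Y) : iterDir e l (Function.update α i a) F = iterDir e l α F := by
  induction l with
  | nil => rfl
  | cons k l ih =>
    have hk : k ≠ i := fun h => hi (h ▸ List.mem_cons_self)
    rw [iterDir, iterDir, ih fun h => hi (List.mem_cons_of_mem _ h), Function.update_of_ne hk]

end IteratedPartials

theorem eq_zero_of_iterDir_eq_zero {F : (Fin n → ℂ) → ℂ} {r : ℝ}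
    (hF : AnalyticOnNhd ℂ F (Metric.ball 0 r)) (l : List (Fin n)) (hl : l.Nodup)
    {x y : Fin n → ℂ} (hx : x ∈ Metric.ball 0 r) (hy : y ∈ Metric.ball 0 r)
    (hxy : ∀ i ∉ l, y i = x i)
    (h : ∀ α, iterDir (fun i => (Pi.single i 1 : Fin n → ℂ)) l α F x = 0) : F y = 0 := by
  have hr : 0 < r := by
    rw [mem_ball_zero_iff] at hx
    exact (norm_nonneg x).trans_lt hx
  induction l generalizing x with
  | nil =>
    have : y = x := funext fun i => hxy i List.not_mem_nil
    rw [this]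
    exact h 0
  | cons i l ih =>
    obtain ⟨hi, hl⟩ := List.nodup_cons.1 hl
    have hx1 : x + (y i - x i) • (Pi.single i 1 : Fin n → ℂ) = Function.update x i (y i) := by
      funext k
      by_cases hk : k = i
      · subst hk; simp
      · simp [hk]
    have hx1' : Function.update x i (y i) ∈ Metric.ball (0 : Fin n → ℂ) r := by
      rw [mem_ball_zero_iff, pi_norm_lt_iff hr] at hx hy ⊢
      intro k
      by_cases hk : k = i
      · subst hk; simpa using hy k
      · simpa [hk] using hx k
    refine ih hl (x := Function.update x i (y i)) hx1' (fun k hk => ?_) fun α => ?_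
    · by_cases hki : k = i
      · subst hki; simp
      · rw [Function.update_of_ne hki]
        exact hxy k (by simp [hki, hk])
    · rw [← hx1] at hx1' ⊢
      refine eq_zero_of_iterate_dirDeriv_eq_zero Metric.isOpen_ball (convex_ball _ _)
        (iterDir_analyticOnNhd hF _ l α) hx (fun j => ?_) hx1'
      have := h (Function.update α i j)
      rwa [iterDir, iterDir_update_of_notMem _ hi, Function.update_self] at this

theorem eventually_eq_zero_of_mpd_eq_zero {F : (Fin n → ℂ) → ℂ} (hF : AnalyticAt ℂ F 0)
    (h : ∀ α, mpd α F 0 = 0) : ∀ᶠ z in 𝓝 0, F z = 0 := by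
  obtain ⟨r, hr, hF⟩ := Metric.eventually_nhds_iff_ball.1 hF.eventually_analyticAt
  filter_upwards [Metric.ball_mem_nhds 0 hr] with y hy
  exact eq_zero_of_iterDir_eq_zero hF _ (List.nodup_finRange n) (Metric.mem_ball_self hr) hy
    (fun i hi => absurd (List.mem_finRange i) hi) fun α => mpd_eq_iterDir α F ▸ h α

/-- No direction `v` is annihilated by all the covectors `∂_χ Q(z,0,0)` with `z` near `0`. -/
def SegreNondeg (Q : (Fin n → ℂ) → (Fin n → ℂ) → ℂ → ℂ) : Prop :=
  ∀ v : Fin n → ℂ, (∀ᶠ z in 𝓝 (0 : Fin n → ℂ), fderiv ℂ (fun χ => Q z χ 0) 0 v = 0) → v = 0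

section FinNondeg

variable {Q : (Fin n → ℂ) → (Fin n → ℂ) → ℂ → ℂ}

theorem IsNormalDF.analyticAt (hQ : IsNormalDF Q) :
    AnalyticAt ℂ (fun q : (Fin n → ℂ) × (Fin n → ℂ) × ℂ => Q q.1 q.2.1 q.2.2) 0 :=
  hQ.1.self_of_nhds

theorem IsNormalDF.analyticAt_slice (hQ : IsNormalDF Q) :
    AnalyticAt ℂ (fun q : (Fin n → ℂ) × (Fin n → ℂ) => Q q.1 q.2 0) 0 :=
  hQ.analyticAt.comp_of_eq (g := fun q : (Fin n → ℂ) × (Fin n → ℂ) × ℂ => Q q.1 q.2.1 q.2.2)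
    (f := fun q : (Fin n → ℂ) × (Fin n → ℂ) => (q.1, q.2, (0 : ℂ)))
    (analyticAt_fst.prod (analyticAt_snd.prod analyticAt_const)) rfl

theorem IsNormalDF.mpd_slice (hQ : IsNormalDF Q) (v : Fin n → ℂ) :
    AnalyticAt ℂ (fun z => fderiv ℂ (fun χ => Q z χ 0) 0 v) 0 ∧
      ∀ α, ∑ i, v i * pd i (fun χ => mpd α (fun z => Q z χ 0) 0) 0 =
        mpd α (fun z => fderiv ℂ (fun χ => Q z χ 0) 0 v) 0 := by
  obtain ⟨r, hr, hG⟩ := Metric.eventually_nhds_iff_ball.1 hQ.analyticAt_slice.eventually_analyticAt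
  set G : (Fin n → ℂ) × (Fin n → ℂ) → ℂ := fun q => Q q.1 q.2 0 with hGdef
  have hG : AnalyticOnNhd ℂ G (Metric.ball 0 r) := hG
  have hball : ∀ z χ : Fin n → ℂ, z ∈ Metric.ball 0 r → χ ∈ Metric.ball 0 r →
      (z, χ) ∈ Metric.ball (0 : (Fin n → ℂ) × (Fin n → ℂ)) r := by
    intro z χ hz hχ
    rw [mem_ball_zero_iff] at *
    exact max_lt hz hχ
  have h0 : (0 : Fin n → ℂ) ∈ Metric.ball (0 : Fin n → ℂ) r := Metric.mem_ball_self hr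
  let L := ContinuousLinearMap.inl ℂ (Fin n → ℂ) (Fin n → ℂ)
  have hfd : ∀ H : (Fin n → ℂ) × (Fin n → ℂ) → ℂ, AnalyticOnNhd ℂ H (Metric.ball 0 r) →
      ∀ z ∈ Metric.ball (0 : Fin n → ℂ) r, ∀ u,
        fderiv ℂ (fun χ => H (z, χ)) 0 u = dirDeriv ((0 : Fin n → ℂ), u) H (z, 0) := by
    intro H hH z hz u
    have h1 := (hH _ (hball z 0 hz h0)).differentiableAt.hasFDerivAt
    have h2 : HasFDerivAt (fun χ : Fin n → ℂ => (z, χ))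
        (ContinuousLinearMap.inr ℂ (Fin n → ℂ) (Fin n → ℂ)) 0 := hasFDerivAt_prodMk_right z 0
    exact DFunLike.congr_fun (h1.comp 0 h2).fderiv u
  have hV : Set.EqOn (fun z => fderiv ℂ (fun χ => Q z χ 0) 0 v)
      (fun z => dirDeriv ((0 : Fin n → ℂ), v) G (L z + 0)) (Metric.ball 0 r) := by
    intro z hz
    simpa [L] using hfd G hG z hz v
  have hVG := hG.dirDeriv ((0 : Fin n → ℂ), v)
  refine ⟨?_, fun α => ?_⟩
  · have : AnalyticAt ℂ (fun z => dirDeriv ((0 : Fin n → ℂ), v) G (L z + 0)) 0 :=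
      (hVG 0 (Metric.mem_ball_self hr)).comp_of_eq ((L.analyticAt 0).add analyticAt_const) (by simp)
    exact this.congr (hV.eventuallyEq_of_mem (Metric.ball_mem_nhds 0 hr)).symm
  · set D := iterDir (fun i => L (Pi.single i 1)) (List.finRange n) α G with hD
    have hDa : AnalyticOnNhd ℂ D (Metric.ball 0 r) := iterDir_analyticOnNhd hG _ _ α
    have h1 : (fun χ => mpd α (fun z => Q z χ 0) 0) =ᶠ[𝓝 0] fun χ => D (0, χ) := by
      filter_upwards [Metric.ball_mem_nhds 0 hr] with χ hχ
      rw [mpd_eq_iterDir]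
      have := iterDir_comp_affine Metric.isOpen_ball hG L (0, χ)
        (fun i => (Pi.single i 1 : Fin n → ℂ)) (List.finRange n) α
        (x := 0) (by simpa using hball 0 χ h0 hχ)
      simpa [L, hGdef, hD] using this
    have h2 : ∑ i, v i * pd i (fun χ => mpd α (fun z => Q z χ 0) 0) 0 =
        dirDeriv ((0 : Fin n → ℂ), v) D (0, 0) := by
      rw [← hfd D hDa 0 h0 v]
      conv_rhs => rw [pi_eq_sum_univ' v]
      simp only [pd, h1.fderiv_eq, map_sum, map_smul, smul_eq_mul]
    rw [h2, mpd_eq_iterDir, iterDir_congr Metric.isOpen_ball hV _ _ _ h0,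
      dirDeriv_iterDir_comm Metric.isOpen_ball hG _ _ _ _ (hball 0 0 h0 h0),
      iterDir_comp_affine Metric.isOpen_ball hVG L 0 _ _ _
        (by simpa using hr)]
    simp only [map_zero, add_zero]
    rfl

theorem FinNondeg.segreNondeg (hQ : IsNormalDF Q) (h : FinNondeg Q) : SegreNondeg Q := by
  obtain ⟨K, hK⟩ := h
  intro v hv
  have hz : ∀ α, mpd α (fun z => fderiv ℂ (fun χ => Q z χ 0) 0 v) 0 = 0 := by
    intro α
    obtain ⟨r, hr, hv⟩ := Metric.eventually_nhds_iff_ball.1 hv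
    rw [mpd_eq_iterDir, iterDir_congr (G := fun _ => 0) Metric.isOpen_ball hv _ _ _
      (Metric.mem_ball_self hr), iterDir_zero]
  let φ : (Fin n → ℂ) →ₗ[ℂ] ℂ := ∑ i, v i • LinearMap.proj i
  have hφ : (⊤ : Submodule ℂ (Fin n → ℂ)) ≤ LinearMap.ker φ := by
    rw [← hK, Submodule.span_le]
    rintro _ ⟨α, -, rfl⟩
    simpa [φ] using ((hQ.mpd_slice v).2 α).trans (hz α)
  funext i
  have : φ (Pi.single i 1) = 0 := hφ Submodule.mem_top
  simpa [φ, Pi.single_apply] using this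

theorem SegreNondeg.finNondeg (hQ : IsNormalDF Q) (h : SegreNondeg Q) : FinNondeg Q := by
  let S : ℕ →o Submodule ℂ (Fin n → ℂ) :=
    ⟨fun K => Submodule.span ℂ {v | ∃ α : Fin n → ℕ, (∑ i, α i) ≤ K ∧
      v = fun i => pd i (fun χ => mpd α (fun z => Q z χ 0) 0) 0},
     fun K K' hK => Submodule.span_mono fun v ⟨α, hα, hv⟩ => ⟨α, hα.trans hK, hv⟩⟩
  suffices hS : iSup S = ⊤ from
    ⟨_, (WellFoundedGT.iSup_eq_monotonicSequenceLimit S).symm.trans hS⟩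
  by_contra hS
  obtain ⟨φ, hφ0, hφ⟩ := Submodule.exists_le_ker_of_lt_top _ (lt_top_iff_ne_top.2 hS)
  have hφv : ∀ u, φ u = ∑ i, φ (Pi.single i 1) * u i := by
    intro u
    conv_lhs => rw [pi_eq_sum_univ' u]
    simp [mul_comm]
  have hv : (fun i => φ (Pi.single i 1)) = 0 := by
    refine h _ (eventually_eq_zero_of_mpd_eq_zero (hQ.mpd_slice _).1 fun α => ?_)
    rw [← (hQ.mpd_slice _).2 α, ← hφv]
    exact hφ (le_iSup S (∑ i, α i) (Submodule.subset_span ⟨α, le_rfl, rfl⟩))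
  refine hφ0 (LinearMap.ext fun u => ?_)
  rw [hφv]
  simp [fun i => congrFun hv i]

end FinNondeg

theorem mk_mem_ball_zero {X Y : Type*} [SeminormedAddCommGroup X] [SeminormedAddCommGroup Y]
    {x : X} {y : Y} {r : ℝ} (hx : x ∈ Metric.ball (0 : X) r)
    (hy : y ∈ Metric.ball (0 : Y) r) : (x, y) ∈ Metric.ball (0 : X × Y) r := by
  rw [mem_ball_zero_iff] at *
  exact max_lt hx hy

theorem eventually_comp_zero {X Y : Type*} [TopologicalSpace X] [TopologicalSpace Y] [Zero X]
    [Zero Y] {f : X → Y} (hf : ContinuousAt f 0) (hf0 : f 0 = 0) {p : Y → Prop}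
    (h : ∀ᶠ y in 𝓝 0, p y) : ∀ᶠ x in 𝓝 0, p (f x) :=
  hf.eventually (hf0.symm ▸ h)

section Degenerate

variable {E X Y : Type*} [NormedAddCommGroup E] [NormedSpace ℂ E]
  [NormedAddCommGroup X] [NormedSpace ℂ X] [NormedAddCommGroup Y] [NormedSpace ℂ Y]

theorem eventually_eq_zero_of_degenerate [CompleteSpace Y] {Φ : E × ℂ × Y → ℂ} {q : E × X → ℂ} {φ : X → Y}
    (hΦ : AnalyticAt ℂ Φ 0) (hq : AnalyticAt ℂ q 0) (hφ : AnalyticAt ℂ φ 0)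
    (hq0 : q 0 = 0) (hφ0 : φ 0 = 0)
    (hker : ∀ᶠ e in 𝓝 (0 : X), ∃ v ≠ 0, fderiv ℂ φ e v = 0)
    (hnd : ∀ r > 0, ∀ᶠ e in 𝓝 (0 : X), ∀ v ≠ 0, ∃ χ ∈ Metric.ball (0 : E) r,
      fderiv ℂ (fun e => q (χ, e)) e v ≠ 0)
    (h : ∀ᶠ p in 𝓝 (0 : E × X), Φ (p.1, q p, φ p.2) = 0) :
    ∀ᶠ p in 𝓝 (0 : E × ℂ × X), Φ (p.1, p.2.1, φ p.2.2) = 0 := by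
  obtain ⟨R, hR, hΦR⟩ := Metric.eventually_nhds_iff_ball.1 hΦ.eventually_analyticAt
  have hΦR : AnalyticOnNhd ℂ Φ (Metric.ball 0 R) := hΦR
  have hcφ : ContinuousAt (fun p : E × X => φ p.2) 0 :=
    ContinuousAt.comp (f := fun p : E × X => p.2) (x := 0) hφ.continuousAt continuousAt_snd
  have hc : ContinuousAt (fun p : E × X => (p.1, q p, φ p.2)) 0 :=
    continuousAt_fst.prodMk (hq.continuousAt.prodMk hcφ)
  have hmem : ∀ᶠ p in 𝓝 (0 : E × X), (p.1, q p, φ p.2) ∈ Metric.ball (0 : E × ℂ × Y) R :=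
    hc.eventually_mem (by
      simp only [Prod.snd_zero, Prod.fst_zero, hq0, hφ0]
      exact Metric.ball_mem_nhds 0 hR)
  have hφ2 : ∀ᶠ p in 𝓝 (0 : E × X), AnalyticAt ℂ φ p.2 :=
    continuousAt_snd.eventually hφ.eventually_analyticAt
  obtain ⟨r, hr, hball⟩ := Metric.eventually_nhds_iff_ball.1
    (hmem.and (hq.eventually_analyticAt.and (hφ2.and h)))
  obtain ⟨s, hs, hsball⟩ := Metric.eventually_nhds_iff_ball.1
    ((hnd r hr).and (hker.and (Metric.ball_mem_nhds (0 : X) hr)))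
  have hsub : ∀ χ ∈ Metric.ball (0 : E) r, ∀ e ∈ Metric.ball (0 : X) s,
      (χ, e) ∈ Metric.ball (0 : E × X) r := fun χ hχ e he => mk_mem_ball_zero hχ (hsball e he).2.2
  have key : ∀ j, ∀ e ∈ Metric.ball (0 : X) s, ∀ χ ∈ Metric.ball (0 : E) r,
      (dirDeriv ((0 : E), (1 : ℂ), (0 : Y)))^[j] Φ (χ, q (χ, e), φ e) = 0 := by
    intro j
    induction j with
    | zero => exact fun e he χ hχ => (hball _ (hsub χ hχ e he)).2.2.2
    | succ j ih =>
      intro e he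
      rw [Function.iterate_succ_apply']
      set Ψ := (dirDeriv ((0 : E), (1 : ℂ), (0 : Y)))^[j] Φ with hΨdef
      have hΨ : AnalyticOnNhd ℂ Ψ (Metric.ball 0 R) := hΦR.iterate_dirDeriv _ j
      obtain ⟨hnd', ⟨v, hv0, hv⟩, -⟩ := hsball e he
      have hqe : ∀ χ ∈ Metric.ball (0 : E) r,
          HasFDerivAt (fun e => q (χ, e))
            ((fderiv ℂ q (χ, e)).comp (ContinuousLinearMap.inr ℂ E X)) e := fun χ hχ =>
        (hball _ (hsub χ hχ e he)).2.1.differentiableAt.hasFDerivAt.comp e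
          (hasFDerivAt_prodMk_right χ e)
      refine eqOn_zero_of_eventually_mul_eq_zero Metric.isOpen_ball (convex_ball _ _)
        (b := fun χ => fderiv ℂ (fun e => q (χ, e)) e v) (fun χ hχ => ?_) (fun χ hχ => ?_)
        (fun χ hχ => ?_) (hnd' v hv0)
      · have hqχ : AnalyticAt ℂ (fun χ => q (χ, e)) χ :=
          (hball _ (hsub χ hχ e he)).2.1.comp_of_eq (analyticAt_id.prod analyticAt_const) rfl
        exact (hΨ.dirDeriv _ _ (hball _ (hsub χ hχ e he)).1).comp_of_eq
          (analyticAt_id.prod (hqχ.prod analyticAt_const)) rfl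
      · have h1 : ContinuousAt (fun χ => fderiv ℂ q (χ, e) ((0 : E), v)) χ := by
          have h2 : ContinuousAt (fun χ => fderiv ℂ q (χ, e)) χ :=
            ContinuousAt.comp (f := fun χ : E => (χ, e)) (x := χ)
              (hball _ (hsub χ hχ e he)).2.1.fderiv.continuousAt (by fun_prop)
          exact h2.clm_apply continuousAt_const
        refine (h1.congr ?_).continuousWithinAt
        filter_upwards [Metric.isOpen_ball.mem_nhds hχ] with χ' hχ'
        rw [(hqe χ' hχ').fderiv]
        rfl
      · obtain ⟨hm, -, hφa, -⟩ := hball _ (hsub χ hχ e he)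
        have h1 := (hΨ _ hm).differentiableAt.hasFDerivAt.comp e ((hasFDerivAt_const χ e).prodMk
          ((hqe χ hχ).prodMk hφa.differentiableAt.hasFDerivAt))
        have h2 : (Ψ ∘ fun e => (χ, q (χ, e), φ e)) =ᶠ[𝓝 e] fun _ => 0 := by
          filter_upwards [Metric.isOpen_ball.mem_nhds he] with e' he'
          exact ih e' he' χ hχ
        have h3 := DFunLike.congr_fun (h1.unique (h2.hasFDerivAt_iff.2 (hasFDerivAt_const 0 e))) v
        rw [(hqe χ hχ).fderiv]
        have h4 : ((0 : E), fderiv ℂ q (χ, e) (0, v), (0 : Y)) =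
            fderiv ℂ q (χ, e) (0, v) • ((0 : E), (1 : ℂ), (0 : Y)) := by simp
        simp only [ContinuousLinearMap.comp_apply, ContinuousLinearMap.prod_apply, hv,
          ContinuousLinearMap.inr_apply, zero_apply] at h3
        rw [h4, map_smul, smul_eq_mul, mul_comm] at h3
        exact h3
  have hc' : ContinuousAt (fun p : E × ℂ × X => (p.1, p.2.1, φ p.2.2)) 0 := by
    have : ContinuousAt (fun p : E × ℂ × X => φ p.2.2) 0 :=
      ContinuousAt.comp (f := fun p : E × ℂ × X => p.2.2) (x := 0) hφ.continuousAt (by fun_prop)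
    fun_prop
  have hmem' : ∀ᶠ p in 𝓝 (0 : E × ℂ × X), (p.1, p.2.1, φ p.2.2) ∈ Metric.ball (0 : E × ℂ × Y) R :=
    hc'.eventually_mem (by
      simp only [Prod.snd_zero, Prod.fst_zero, hφ0]
      exact Metric.ball_mem_nhds 0 hR)
  have hm1 : ∀ᶠ p in 𝓝 (0 : E × ℂ × X), p.1 ∈ Metric.ball (0 : E) r :=
    continuousAt_fst.eventually_mem (Metric.ball_mem_nhds 0 hr)
  have hm2 : ∀ᶠ p in 𝓝 (0 : E × ℂ × X), p.2.2 ∈ Metric.ball (0 : X) s :=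
    (by fun_prop : ContinuousAt (fun p : E × ℂ × X => p.2.2) 0).eventually_mem
      (Metric.ball_mem_nhds 0 hs)
  filter_upwards [hmem', hm1, hm2] with ⟨χ, τ, e⟩ h1 h2 h3
  have h4 : (χ, q (χ, e), φ e) + (τ - q (χ, e)) • ((0 : E), (1 : ℂ), (0 : Y)) = (χ, τ, φ e) := by
    simp
  rw [← h4] at h1 ⊢
  exact eq_zero_of_iterate_dirDeriv_eq_zero Metric.isOpen_ball (convex_ball _ _) hΦR
    (hball _ (hsub χ h2 e h3)).1 (fun j => key j e h3 χ h2) h1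

end Degenerate

section NonIsolated

variable {X : Type*} [NormedAddCommGroup X] [NormedSpace ℂ X]

theorem analyticAt_of_contDiffAt {Y : Type*} [NormedAddCommGroup Y] [NormedSpace ℂ Y]
    [CompleteSpace Y] {F : X → Y} {x : X} (h : ContDiffAt ℂ ⊤ F x) : AnalyticAt ℂ F x :=
  h.analyticAt

/-- Zeros of a holomorphic function of two variables are not isolated. -/
theorem frequently_eq_zero_of_prod {d : ℂ × ℂ → ℂ} (hd : AnalyticAt ℂ d 0) (h0 : d 0 = 0) :
    ∃ᶠ p in 𝓝[≠] (0 : ℂ × ℂ), d p = 0 := by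
  intro hne
  rw [eventually_nhdsWithin_iff] at hne
  obtain ⟨r, hr, hb⟩ := Metric.eventually_nhds_iff_ball.1 (hd.eventually_analyticAt.and hne)
  have hmem : ∀ x ∈ Metric.closedBall (0 : ℂ) (r / 2), ∀ y ∈ Metric.closedBall (0 : ℂ) (r / 2),
      (x, y) ∈ Metric.ball (0 : ℂ × ℂ) r := by
    intro x hx y hy
    rw [mem_closedBall_zero_iff] at hx hy
    rw [mem_ball_zero_iff]
    exact (max_le hx hy).trans_lt (by linarith)
  have hr2 : 0 < r / 2 := by positivity
  have hy0 : (0 : ℂ) ∈ Metric.closedBall (0 : ℂ) (r / 2) := Metric.mem_closedBall_self hr2.le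
  have hcont : ContinuousOn d (Metric.ball 0 r) := fun p hp =>
    (hb p hp).1.continuousAt.continuousWithinAt
  have hK : IsCompact (Metric.sphere (0 : ℂ) (r / 2) ×ˢ Metric.closedBall (0 : ℂ) (r / 2)) :=
    (isCompact_sphere _ _).prod (isCompact_closedBall _ _)
  have hKsub : Metric.sphere (0 : ℂ) (r / 2) ×ˢ Metric.closedBall (0 : ℂ) (r / 2) ⊆
      Metric.ball (0 : ℂ × ℂ) r := fun p hp =>
    hmem _ (Metric.sphere_subset_closedBall hp.1) _ hp.2
  have hKne : (Metric.sphere (0 : ℂ) (r / 2) ×ˢ Metric.closedBall (0 : ℂ) (r / 2)).Nonempty :=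
    ⟨(((r / 2 : ℝ) : ℂ), 0), by simp [abs_of_pos hr], hy0⟩
  obtain ⟨p₀, hp₀, hmin⟩ := hK.exists_isMinOn hKne (hcont.mono hKsub).norm
  have hp₀d : 0 < ‖d p₀‖ := norm_pos_iff.2 ((hb p₀ (hKsub hp₀)).2 fun h => by
    have h1 := hp₀.1
    have h2 : p₀ = 0 := h
    rw [h2] at h1
    simp at h1
    linarith)
  have hlow : ∀ y ∈ Metric.closedBall (0 : ℂ) (r / 2), y ≠ 0 → ‖d p₀‖ ≤ ‖d (0, y)‖ := by
    intro y hy hyne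
    have hnz : ∀ x ∈ Metric.closedBall (0 : ℂ) (r / 2), d (x, y) ≠ 0 := fun x hx =>
      (hb _ (hmem x hx y hy)).2 fun h => hyne (congrArg Prod.snd h)
    have hdiff : DifferentiableOn ℂ (fun x => (d (x, y))⁻¹) (Metric.closedBall 0 (r / 2)) := by
      intro x hx
      have : DifferentiableAt ℂ (fun x => d (x, y)) x :=
        DifferentiableAt.comp (f := fun x : ℂ => (x, y)) x
          (hb _ (hmem x hx y hy)).1.differentiableAt (by fun_prop)
      exact (this.inv (hnz x hx)).differentiableWithinAt
    have hcl : DiffContOnCl ℂ (fun x => (d (x, y))⁻¹) (Metric.ball 0 (r / 2)) := by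
      refine DifferentiableOn.diffContOnCl ?_
      rwa [closure_ball _ hr2.ne']
    have := Complex.norm_le_of_forall_mem_frontier_norm_le Metric.isBounded_ball hcl
      (C := ‖d p₀‖⁻¹) (fun x hx => ?_) (subset_closure (Metric.mem_ball_self hr2))
    · rw [norm_inv] at this
      exact (inv_le_inv₀ (norm_pos_iff.2 (hnz 0 hy0)) hp₀d).1 this
    · rw [frontier_ball _ hr2.ne'] at hx
      rw [norm_inv]
      exact inv_anti₀ hp₀d (hmin (Set.mk_mem_prod hx hy))
  have hlim : Tendsto (fun y : ℂ => ‖d (0, y)‖) (𝓝[≠] 0) (𝓝 0) := by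
    have : ContinuousAt (fun y : ℂ => ‖d (0, y)‖) 0 :=
      (ContinuousAt.comp (f := fun y : ℂ => ((0 : ℂ), y)) (x := 0) hd.continuousAt
        (by fun_prop)).norm
    have h2 := this.tendsto
    have h3 : d (0, 0) = 0 := h0
    rw [h3, norm_zero] at h2
    exact h2.mono_left nhdsWithin_le_nhds
  have hge : ∀ᶠ y in 𝓝[≠] (0 : ℂ), ‖d p₀‖ ≤ ‖d (0, y)‖ := by
    filter_upwards [nhdsWithin_le_nhds (Metric.closedBall_mem_nhds (0 : ℂ) hr2),
      self_mem_nhdsWithin] with y hy hyne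
    exact hlow y hy hyne
  exact absurd (ge_of_tendsto hlim hge) (not_le.2 hp₀d)

theorem frequently_eq_zero_of_linearIndependent [CompleteSpace X] {d : X → ℂ} (hd : AnalyticAt ℂ d 0) (h0 : d 0 = 0)
    {u v : X} (huv : LinearIndependent ℂ ![u, v]) : ∃ᶠ p in 𝓝[≠] (0 : X), d p = 0 := by
  let L : ℂ × ℂ → X := fun p => p.1 • u + p.2 • v
  have hL : AnalyticAt ℂ L 0 := analyticAt_of_contDiffAt (by fun_prop)
  have hL0 : L 0 = 0 := by simp [L]
  refine Tendsto.frequently (f := L) ?_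
    (frequently_eq_zero_of_prod (hd.comp_of_eq hL hL0) (by simpa [hL0] using h0))
  refine tendsto_nhdsWithin_iff.2 ⟨?_, ?_⟩
  · have := hL.continuousAt.tendsto
    rw [hL0] at this
    exact this.mono_left nhdsWithin_le_nhds
  · filter_upwards [self_mem_nhdsWithin] with p hp hp0
    have := LinearIndependent.pair_iff.1 huv p.1 p.2 hp0
    exact hp (Prod.ext this.1 this.2)

end NonIsolated

theorem exists_finset_forall_ker_eq_zero {E P : Type*} [NormedAddCommGroup E] [NormedSpace ℂ E]
    [NormedAddCommGroup P] [NormedSpace ℂ P] [FiniteDimensional ℂ P]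
    {A : E × P → P →L[ℂ] ℂ} {ρ : ℝ} (hρ : 0 < ρ) (hA : AnalyticOnNhd ℂ A (Metric.ball 0 ρ))
    (hker : ∀ v, (∀ᶠ z in 𝓝 0, A (z, 0) v = 0) → v = 0)
    {N : Set E} (hN : IsOpen N) (hNρ : N ⊆ Metric.ball 0 ρ) (hNne : N.Nonempty) :
    ∃ t : Finset E, ↑t ⊆ N ∧ ∀ᶠ p in 𝓝 (0 : P), ∀ v, (∀ z ∈ t, A (z, p) v = 0) → v = 0 := by
  have : ProperSpace P := FiniteDimensional.proper ℂ P
  have h0P : (0 : P) ∈ Metric.ball (0 : P) ρ := Metric.mem_ball_self hρ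
  have hAz : ∀ v, AnalyticOnNhd ℂ (fun z => A (z, 0) v) (Metric.ball 0 ρ) := fun v z hz =>
    ((ContinuousLinearMap.apply ℂ ℂ v).analyticAt _).comp
      ((hA _ (mk_mem_ball_zero hz h0P)).comp_of_eq (analyticAt_id.prod analyticAt_const) rfl)
  have hne : ∀ v ≠ 0, ∃ z ∈ N, A (z, 0) v ≠ 0 := by
    intro v hv
    by_contra! hcon
    obtain ⟨z, hz⟩ := hNne
    have := (hAz v).eqOn_zero_of_preconnected_of_eventuallyEq_zero
      (convex_ball _ _).isPreconnected (hNρ hz)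
      ((show Set.EqOn (fun z => A (z, 0) v) 0 N from hcon).eventuallyEq_of_mem (hN.mem_nhds hz))
    exact hv (hker v (this.eventuallyEq_of_mem (Metric.ball_mem_nhds 0 hρ)))
  obtain ⟨t, ht⟩ := (isCompact_sphere (0 : P) 1).elim_finite_subcover
    (fun z : N => {v | A (z, 0) v ≠ 0})
    (fun z => isOpen_ne_fun (A (z, 0)).continuous continuous_const) fun v hv => by
      obtain ⟨z, hz, hzv⟩ := hne v (Metric.ne_of_mem_sphere hv one_ne_zero)
      exact Set.mem_iUnion.2 ⟨⟨z, hz⟩, hzv⟩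
  classical
  refine ⟨t.image (↑), fun z hz => ?_, ?_⟩
  · obtain ⟨z', -, rfl⟩ := Finset.mem_image.1 (Finset.mem_coe.1 hz)
    exact z'.2
  · let T : P → P →L[ℂ] (t → ℂ) := fun p => ContinuousLinearMap.pi fun z => A (z.1, p)
    have hT : ContinuousAt T 0 := by
      refine (ContinuousLinearMap.piEquivL ℂ _ _).continuous.continuousAt.comp
        (f := fun p (z : t) => A (z.1, p)) (continuousAt_pi.2 fun z => ?_)
      exact ContinuousAt.comp (f := fun p : P => ((z : E), p)) (x := 0)
        (hA _ (mk_mem_ball_zero (hNρ z.1.2) h0P)).continuousAt (by fun_prop)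
    have hinj : Function.Injective (T 0) := by
      refine (injective_iff_map_eq_zero (T 0)).2 fun v hv => ?_
      by_contra hv0
      have hmem : ((‖v‖⁻¹ : ℝ) : ℂ) • v ∈ Metric.sphere (0 : P) 1 := by
        simp [norm_smul, hv0]
      obtain ⟨z, hz, hzv⟩ := Set.mem_iUnion₂.1 (ht hmem)
      refine hzv ?_
      have := congrFun hv ⟨z, hz⟩
      simp only [T, ContinuousLinearMap.pi_apply, Pi.zero_apply] at this
      rw [map_smul, this, smul_zero]
    filter_upwards [hT.eventually (ContinuousLinearMap.isOpen_injective.mem_nhds hinj)]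
      with p hp v hv
    refine hp ?_
    rw [map_zero]
    funext z
    exact hv _ (Finset.mem_image_of_mem _ z.2)

/-- The differential of `(χ,τ) ↦ Q(z,χ,τ)` at `p`. -/
noncomputable def covec (Q : (Fin n → ℂ) → (Fin n → ℂ) → ℂ → ℂ) (z : Fin n → ℂ)
    (p : (Fin n → ℂ) × ℂ) : (Fin n → ℂ) × ℂ →L[ℂ] ℂ :=
  fderiv ℂ (fun p : (Fin n → ℂ) × ℂ => Q z p.1 p.2) p

section Covec

variable {Q : (Fin n → ℂ) → (Fin n → ℂ) → ℂ → ℂ}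

theorem hasFDerivAt_covec {z : Fin n → ℂ} {p : (Fin n → ℂ) × ℂ}
    (h : AnalyticAt ℂ (fun q : (Fin n → ℂ) × (Fin n → ℂ) × ℂ => Q q.1 q.2.1 q.2.2) (z, p)) :
    HasFDerivAt (fun p : (Fin n → ℂ) × ℂ => Q z p.1 p.2) (covec Q z p) p := by
  have h1 : HasFDerivAt (fun p : (Fin n → ℂ) × ℂ => Q z p.1 p.2) _ p :=
    h.differentiableAt.hasFDerivAt.comp p (hasFDerivAt_prodMk_right z p)
  exact h1.differentiableAt.hasFDerivAt

theorem covec_eq {z : Fin n → ℂ} {p : (Fin n → ℂ) × ℂ}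
    (h : AnalyticAt ℂ (fun q : (Fin n → ℂ) × (Fin n → ℂ) × ℂ => Q q.1 q.2.1 q.2.2) (z, p)) :
    covec Q z p = (fderiv ℂ (fun q : (Fin n → ℂ) × (Fin n → ℂ) × ℂ => Q q.1 q.2.1 q.2.2) (z, p)).comp
      (ContinuousLinearMap.inr ℂ _ _) :=
  (h.differentiableAt.hasFDerivAt.comp p (hasFDerivAt_prodMk_right z p)).fderiv

theorem analyticAt_covec {q : (Fin n → ℂ) × (Fin n → ℂ) × ℂ}
    (h : AnalyticAt ℂ (fun q : (Fin n → ℂ) × (Fin n → ℂ) × ℂ => Q q.1 q.2.1 q.2.2) q) :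
    AnalyticAt ℂ (fun q : (Fin n → ℂ) × (Fin n → ℂ) × ℂ => covec Q q.1 q.2) q := by
  have h1 := (((ContinuousLinearMap.compL ℂ ((Fin n → ℂ) × ℂ) _ ℂ).flip
    (ContinuousLinearMap.inr ℂ (Fin n → ℂ) ((Fin n → ℂ) × ℂ))).analyticAt _).comp h.fderiv
  refine h1.congr ?_
  filter_upwards [h.eventually_analyticAt] with q hq
  exact (covec_eq hq).symm

theorem covec_slice {z χ : Fin n → ℂ}
    (h : AnalyticAt ℂ (fun q : (Fin n → ℂ) × (Fin n → ℂ) × ℂ => Q q.1 q.2.1 q.2.2) (z, χ, 0))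
    (v : Fin n → ℂ) : fderiv ℂ (fun χ => Q z χ 0) χ v = covec Q z (χ, 0) (v, 0) := by
  have h1 := HasFDerivAt.comp (f := fun χ : Fin n → ℂ => (χ, (0 : ℂ))) χ (hasFDerivAt_covec h)
    (hasFDerivAt_prodMk_left χ (0 : ℂ))
  exact DFunLike.congr_fun h1.fderiv v

theorem IsNormalDF.exists_analyticOnNhd (hQ : IsNormalDF Q) : ∃ ρ > 0,
    AnalyticOnNhd ℂ (fun q : (Fin n → ℂ) × (Fin n → ℂ) × ℂ => Q q.1 q.2.1 q.2.2)
      (Metric.ball 0 ρ) :=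
  Metric.eventually_nhds_iff_ball.1 hQ.1

theorem IsNormalDF.eventually_zero_left (hQ : IsNormalDF Q) :
    ∀ᶠ p in 𝓝 (0 : (Fin n → ℂ) × ℂ), Q 0 p.1 p.2 = p.2 := by
  have h : ContinuousAt (fun p : (Fin n → ℂ) × ℂ => ((0 : Fin n → ℂ), p)) 0 := by fun_prop
  exact (h.eventually hQ.2).mono fun p hp => hp.1

theorem IsNormalDF.eventually_zero_right (hQ : IsNormalDF Q) :
    ∀ᶠ p in 𝓝 (0 : (Fin n → ℂ) × ℂ), Q p.1 0 p.2 = p.2 := by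
  have h : ContinuousAt (fun p : (Fin n → ℂ) × ℂ => (p.1, (0 : Fin n → ℂ), p.2)) 0 := by fun_prop
  exact (h.eventually hQ.2).mono fun p hp => hp.2

theorem IsNormalDF.covec_zero_zero (hQ : IsNormalDF Q) (v : (Fin n → ℂ) × ℂ) :
    covec Q 0 0 v = v.2 := by
  have h : (fun p : (Fin n → ℂ) × ℂ => Q 0 p.1 p.2) =ᶠ[𝓝 0] Prod.snd := hQ.eventually_zero_left
  rw [covec, h.fderiv_eq, fderiv_snd]
  rfl

theorem SegreNondeg.exists_finset (hQ : IsNormalDF Q) (h : SegreNondeg Q) {ρ : ℝ} (hρ : 0 < ρ)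
    (ha : AnalyticOnNhd ℂ (fun q : (Fin n → ℂ) × (Fin n → ℂ) × ℂ => Q q.1 q.2.1 q.2.2)
      (Metric.ball 0 ρ))
    {N : Set (Fin n → ℂ)} (hN : IsOpen N) (hNρ : N ⊆ Metric.ball 0 ρ) (hNne : N.Nonempty) :
    ∃ t : Finset (Fin n → ℂ), ↑t ⊆ N ∧
      ∀ᶠ p in 𝓝 (0 : (Fin n → ℂ) × ℂ), ∀ v, (∀ z ∈ t, covec Q z p v = 0) → v = 0 := by
  refine exists_finset_forall_ker_eq_zero (A := fun q => covec Q q.1 q.2) hρ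
    (fun q hq => analyticAt_covec (ha q hq)) (fun v hv => ?_) hN hNρ hNne
  have h2 : v.2 = 0 := by
    rw [← hQ.covec_zero_zero v]
    exact hv.self_of_nhds
  have hv1 : v = (v.1, 0) := Prod.ext rfl h2
  refine Prod.ext (h v.1 ?_) h2
  filter_upwards [hv, Metric.ball_mem_nhds 0 hρ] with z hz hzρ
  rw [covec_slice (ha _ (mk_mem_ball_zero hzρ (Metric.mem_ball_self hρ))), ← hv1]
  exact hz

theorem SegreNondeg.eventually_covec_ne_zero (hQ : IsNormalDF Q) (h : SegreNondeg Q) {r : ℝ}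
    (hr : 0 < r) : ∀ᶠ p in 𝓝 (0 : (Fin n → ℂ) × ℂ), ∀ v ≠ 0,
      ∃ z ∈ Metric.ball (0 : Fin n → ℂ) r, covec Q z p v ≠ 0 := by
  obtain ⟨ρ, hρ, ha⟩ := hQ.exists_analyticOnNhd
  obtain ⟨t, htN, ht⟩ := h.exists_finset hQ hρ ha (N := Metric.ball 0 (min r ρ)) Metric.isOpen_ball
    (Metric.ball_subset_ball (min_le_right _ _)) ⟨0, Metric.mem_ball_self (lt_min hr hρ)⟩
  filter_upwards [ht] with p hp v hv
  by_contra! hcon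
  exact hv (hp v fun z hz => hcon z (Metric.ball_subset_ball (min_le_left _ _) (htN hz)))

end Covec

section Conjugate

variable {Q Q' : (Fin n → ℂ) → (Fin n → ℂ) → ℂ → ℂ}

theorem conjV_conjV (z : Fin n → ℂ) : conjV (conjV z) = z := funext fun i => conj_conj (z i)

theorem conjV_zero : conjV (0 : Fin n → ℂ) = 0 := funext fun _ => map_zero _

theorem continuous_conjV : Continuous (conjV : (Fin n → ℂ) → Fin n → ℂ) :=
  continuous_pi fun i => continuous_conj.comp (continuous_apply i)

theorem eventually_conj {p : (Fin n → ℂ) × (Fin n → ℂ) × ℂ → Prop} (h : ∀ᶠ q in 𝓝 0, p q) :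
    ∀ᶠ q in 𝓝 (0 : (Fin n → ℂ) × (Fin n → ℂ) × ℂ),
      p (conjV q.1, conjV q.2.1, starRingEnd ℂ q.2.2) := by
  have hc : Continuous fun q : (Fin n → ℂ) × (Fin n → ℂ) × ℂ =>
      (conjV q.1, conjV q.2.1, starRingEnd ℂ q.2.2) :=
    (continuous_conjV.comp continuous_fst).prodMk
      ((continuous_conjV.comp (continuous_fst.comp continuous_snd)).prodMk
        (continuous_conj.comp (continuous_snd.comp continuous_snd)))
  exact eventually_comp_zero hc.continuousAt (by simp [conjV_zero]) h

theorem IsNormalDF.apply_zero (hQ : IsNormalDF Q) : Q 0 0 0 = 0 := hQ.2.self_of_nhds.1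

theorem IsNormalDF.fderiv_zero (hQ : IsNormalDF Q) (v : (Fin n → ℂ) × (Fin n → ℂ) × ℂ) :
    fderiv ℂ (fun q : (Fin n → ℂ) × (Fin n → ℂ) × ℂ => Q q.1 q.2.1 q.2.2) 0 v = v.2.2 := by
  have h1 := congrArg (fun T => T v.2) (covec_eq (z := 0) (p := 0) hQ.analyticAt)
  simp only [hQ.covec_zero_zero, ContinuousLinearMap.comp_apply,
    ContinuousLinearMap.inr_apply] at h1
  have h2 : fderiv ℂ (fun q : (Fin n → ℂ) × (Fin n → ℂ) × ℂ => Q q.1 q.2.1 q.2.2) 0 (v.1, 0) = 0 := by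
    have h3 := HasFDerivAt.comp (f := fun z : Fin n → ℂ => (z, (0 : (Fin n → ℂ) × ℂ))) 0
      hQ.analyticAt.differentiableAt.hasFDerivAt (hasFDerivAt_prodMk_left 0 0)
    have h4 : ((fun q : (Fin n → ℂ) × (Fin n → ℂ) × ℂ => Q q.1 q.2.1 q.2.2) ∘
        fun z : Fin n → ℂ => (z, (0 : (Fin n → ℂ) × ℂ))) =ᶠ[𝓝 0] fun _ => 0 := by
      have hc : ContinuousAt (fun z : Fin n → ℂ => (z, (0 : ℂ))) 0 := by fun_prop
      exact hc.eventually hQ.eventually_zero_right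
    exact DFunLike.congr_fun (h3.unique (h4.hasFDerivAt_iff.2 (hasFDerivAt_const 0 0))) v.1
  have h5 : v = (v.1, 0) + (0, v.2) := by simp
  rw [h5, map_add, h2, zero_add]
  exact h1.symm.trans (by simp)

theorem IsRealNormalDF.eventually_involution (hQ : IsRealNormalDF Q) :
    ∀ᶠ q in 𝓝 (0 : (Fin n → ℂ) × (Fin n → ℂ) × ℂ), QBar Q q.1 q.2.1 (Q q.2.1 q.1 q.2.2) = q.2.2 := by
  filter_upwards [eventually_conj hQ.2] with q hq
  have := congrArg (starRingEnd ℂ) hq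
  simpa [QBar, conjV_conjV] using this

theorem IsRealNormalDF.isNormalDF_qBar (hQ : IsRealNormalDF Q) : IsNormalDF (QBar Q) := by
  refine ⟨AnalyticAt.eventually_analyticAt ?_, ?_⟩
  · let Θ : (Fin n → ℂ) × (Fin n → ℂ) × ℂ →
        (Fin n → ℂ) × (Fin n → ℂ) × ℂ := fun q => (q.1, q.2.1, Q q.2.1 q.1 q.2.2)
    have hQa := hQ.1.analyticAt
    have hsw : AnalyticAt ℂ (fun q : (Fin n → ℂ) × (Fin n → ℂ) × ℂ => (q.2.1, q.1, q.2.2)) 0 :=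
      analyticAt_of_contDiffAt (by fun_prop)
    have hQs : AnalyticAt ℂ (fun q : (Fin n → ℂ) × (Fin n → ℂ) × ℂ => Q q.2.1 q.1 q.2.2) 0 :=
      AnalyticAt.comp_of_eq (f := fun q : (Fin n → ℂ) × (Fin n → ℂ) × ℂ => (q.2.1, q.1, q.2.2)) hQa hsw rfl
    have hΘ : AnalyticAt ℂ Θ 0 :=
      analyticAt_fst.prod ((analyticAt_fst.comp analyticAt_snd).prod hQs)
    have hΘ0 : Θ 0 = 0 := by simpa [Θ] using hQ.1.apply_zero
    have hΘ' : HasFDerivAt Θ ((ContinuousLinearEquiv.refl ℂ ((Fin n → ℂ) × (Fin n → ℂ) × ℂ) : (Fin n → ℂ) × (Fin n → ℂ) × ℂ →L[ℂ] (Fin n → ℂ) × (Fin n → ℂ) × ℂ)) 0 := by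
      have hsw' : HasFDerivAt (fun q : (Fin n → ℂ) × (Fin n → ℂ) × ℂ => (q.2.1, q.1, q.2.2)) _ 0 :=
        hsw.differentiableAt.hasFDerivAt
      have h1 : HasFDerivAt (fun q : (Fin n → ℂ) × (Fin n → ℂ) × ℂ => Q q.2.1 q.1 q.2.2) _ 0 :=
        HasFDerivAt.comp (f := fun q : (Fin n → ℂ) × (Fin n → ℂ) × ℂ => (q.2.1, q.1, q.2.2)) 0
          hQa.differentiableAt.hasFDerivAt
          ((hasFDerivAt_snd.fst).prodMk (hasFDerivAt_fst.prodMk hasFDerivAt_snd.snd))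
      refine (hasFDerivAt_fst.prodMk (hasFDerivAt_snd.fst.prodMk h1)).congr_fderiv ?_
      ext1
      · ext <;> simp [hQ.1.fderiv_zero]
      · ext <;> simp [hQ.1.fderiv_zero]
    have hs : HasStrictFDerivAt Θ ((ContinuousLinearEquiv.refl ℂ ((Fin n → ℂ) × (Fin n → ℂ) × ℂ) : (Fin n → ℂ) × (Fin n → ℂ) × ℂ →L[ℂ] (Fin n → ℂ) × (Fin n → ℂ) × ℂ)) 0 := by
      have := hΘ.hasStrictFDerivAt
      rwa [hΘ'.fderiv] at this
    have hinv := hs.localInverse_unique (g := fun q : (Fin n → ℂ) × (Fin n → ℂ) × ℂ => (q.1, q.2.1, QBar Q q.1 q.2.1 q.2.2))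
      (hQ.eventually_involution.mono fun q hq => Prod.ext rfl (Prod.ext rfl hq))
    have han : AnalyticAt ℂ (hs.localInverse Θ _ 0) (Θ 0) := by
      rw [HasStrictFDerivAt.localInverse_def]
      exact (hs.toOpenPartialHomeomorph Θ).analyticAt_symm'
        hs.mem_toOpenPartialHomeomorph_source hΘ hΘ'.fderiv
    rw [hΘ0] at hinv han
    exact ((analyticAt_snd.comp analyticAt_snd).comp han).congr
      (hinv.mono fun q hq => (congrArg (fun x : (Fin n → ℂ) × (Fin n → ℂ) × ℂ => x.2.2) hq).symm)
  · filter_upwards [eventually_conj hQ.1.2] with q hq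
    constructor
    · simp [QBar, conjV_zero, hq.1]
    · simp [QBar, conjV_zero, hq.2]

theorem SegreNondeg.qBar (hQ : IsRealNormalDF Q) (h : SegreNondeg Q) : SegreNondeg (QBar Q) := by
  intro v hv
  suffices conjV v = 0 by rw [← conjV_conjV v, this, conjV_zero]
  refine h _ ?_
  have hline : ∀ {R : (Fin n → ℂ) → (Fin n → ℂ) → ℂ → ℂ} (hR : IsNormalDF R), ∀ᶠ z in 𝓝 0, ∀ u,
      HasDerivAt (fun t : ℂ => R z (t • u) 0) (fderiv ℂ (fun χ => R z χ 0) 0 u) 0 := by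
    intro R hR
    have hc : ContinuousAt (fun z : Fin n → ℂ => (z, (0 : Fin n → ℂ), (0 : ℂ))) 0 := by fun_prop
    filter_upwards [hc.eventually hR.1] with z hz u
    have h1 : DifferentiableAt ℂ (fun χ => R z χ 0) 0 :=
      DifferentiableAt.comp (f := fun χ : Fin n → ℂ => (z, χ, (0 : ℂ))) 0
        hz.differentiableAt (by fun_prop)
    have h2 : HasDerivAt (fun t : ℂ => t • u) u 0 := by
      simpa using (hasDerivAt_id (0 : ℂ)).smul_const u
    have h3 := h1.hasFDerivAt
    rw [← zero_smul ℂ u] at h3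
    have h4 := HasFDerivAt.comp_hasDerivAt (f := fun t : ℂ => t • u) 0 h3 h2
    rwa [zero_smul] at h4
  have hcj : ∀ {p : (Fin n → ℂ) → Prop}, (∀ᶠ z in 𝓝 0, p z) → ∀ᶠ z in 𝓝 0, p (conjV z) := by
    intro p hp
    exact eventually_comp_zero continuous_conjV.continuousAt conjV_zero hp
  filter_upwards [hcj hv, hline hQ.1, hcj (hline hQ.isNormalDF_qBar)] with z hz h1 h2
  have h3 := (h2 v).conj_conj
  rw [hz] at h3
  have h4 : (starRingEnd ℂ ∘ (fun t : ℂ => QBar Q (conjV z) (t • v) 0) ∘ starRingEnd ℂ) =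
      fun t : ℂ => Q z (t • conjV v) 0 := by
    funext t
    have : conjV (starRingEnd ℂ t • v) = t • conjV v := by
      funext i
      simp [conjV]
    simp [QBar, conjV_conjV, this]
  rw [h4] at h3
  simp only [map_zero] at h3
  exact (h1 _).unique h3

end Conjugate

section Dual

variable {Q Q' : (Fin n → ℂ) → (Fin n → ℂ) → ℂ → ℂ}
  {f ft : (Fin n → ℂ) → ℂ → Fin n → ℂ} {g gt : (Fin n → ℂ) → ℂ → ℂ}

theorem IsHSPM.dual (hQ : IsRealNormalDF Q) (hQ' : IsRealNormalDF Q') (h : IsHSPM Q Q' f g ft gt) :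
    IsHSPM (QBar Q) (QBar Q') ft gt f g := by
  obtain ⟨hf, hg, hft, hgt, hf0, hg0, hft0, hgt0, hid⟩ := h
  refine ⟨hft, hgt, hf, hg, hft0, hgt0, hf0, hg0, ?_⟩
  have hP := hQ.isNormalDF_qBar
  have hPc : ContinuousAt (fun q : (Fin n → ℂ) × (Fin n → ℂ) × ℂ => QBar Q q.1 q.2.1 q.2.2) 0 := hP.analyticAt.continuousAt
  have hP0 : QBar Q 0 0 0 = 0 := hP.apply_zero
  have hc1 : ContinuousAt (fun q : (Fin n → ℂ) × (Fin n → ℂ) × ℂ => (q.2.1, q.1, QBar Q q.1 q.2.1 q.2.2)) 0 := by fun_prop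
  have hc2 : ContinuousAt (fun q : (Fin n → ℂ) × (Fin n → ℂ) × ℂ => (q.2.1, q.1, q.2.2)) 0 := by fun_prop
  have hc3 : ContinuousAt (fun q : (Fin n → ℂ) × (Fin n → ℂ) × ℂ => (q.1, QBar Q q.1 q.2.1 q.2.2)) 0 := by fun_prop
  have hc4 : ContinuousAt (fun q : (Fin n → ℂ) × (Fin n → ℂ) × ℂ => q.2) 0 := by fun_prop
  have hftc : ContinuousAt (fun q : (Fin n → ℂ) × (Fin n → ℂ) × ℂ => ft q.1 (QBar Q q.1 q.2.1 q.2.2)) 0 :=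
    ContinuousAt.comp_of_eq (f := fun q : (Fin n → ℂ) × (Fin n → ℂ) × ℂ => (q.1, QBar Q q.1 q.2.1 q.2.2)) (y := 0)
      hft.self_of_nhds.continuousAt hc3 (by simp [hP0])
  have hgtc : ContinuousAt (fun q : (Fin n → ℂ) × (Fin n → ℂ) × ℂ => gt q.1 (QBar Q q.1 q.2.1 q.2.2)) 0 :=
    ContinuousAt.comp_of_eq (f := fun q : (Fin n → ℂ) × (Fin n → ℂ) × ℂ => (q.1, QBar Q q.1 q.2.1 q.2.2)) (y := 0)
      hgt.self_of_nhds.continuousAt hc3 (by simp [hP0])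
  have hfc : ContinuousAt (fun q : (Fin n → ℂ) × (Fin n → ℂ) × ℂ => f q.2.1 q.2.2) 0 :=
    ContinuousAt.comp_of_eq (f := fun q : (Fin n → ℂ) × (Fin n → ℂ) × ℂ => q.2) (y := 0)
      hf.self_of_nhds.continuousAt hc4 rfl
  have hc5 : ContinuousAt (fun q : (Fin n → ℂ) × (Fin n → ℂ) × ℂ => (ft q.1 (QBar Q q.1 q.2.1 q.2.2), f q.2.1 q.2.2,
      gt q.1 (QBar Q q.1 q.2.1 q.2.2))) 0 := hftc.prodMk (hfc.prodMk hgtc)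
  have e1 := eventually_comp_zero hc1 (by simp [hP0]) hid
  have e2 := eventually_comp_zero hc2 rfl hQ.2
  have e3 := eventually_comp_zero hc5 (by simp [hP0, hft0, hgt0, hf0]) hQ'.eventually_involution
  filter_upwards [e1, e2, e3] with q h1 h2 h3
  rw [h2] at h1
  rw [← h1] at h3
  exact h3.symm

theorem IsHSPM.eventually_g_zero (hQ : IsNormalDF Q) (hQ' : IsNormalDF Q')
    (h : IsHSPM Q Q' f g ft gt) : ∀ᶠ z in 𝓝 0, g z 0 = 0 := by
  obtain ⟨hf, hg, hft, hgt, hf0, hg0, hft0, hgt0, hid⟩ := h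
  have hc : ContinuousAt (fun z : Fin n → ℂ => (z, (0 : Fin n → ℂ), (0 : ℂ))) 0 := by fun_prop
  have hc1 : ContinuousAt (fun z : Fin n → ℂ => (z, (0 : ℂ))) 0 := by fun_prop
  have hfc : ContinuousAt (fun z : Fin n → ℂ => f z 0) 0 :=
    ContinuousAt.comp (f := fun z : Fin n → ℂ => (z, (0 : ℂ))) (x := 0)
      hf.self_of_nhds.continuousAt hc1
  have hc2 : ContinuousAt (fun z : Fin n → ℂ => (f z 0, (0 : ℂ))) 0 := hfc.prodMk continuousAt_const
  filter_upwards [eventually_comp_zero hc rfl hid,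
    eventually_comp_zero hc1 rfl hQ.eventually_zero_right,
    eventually_comp_zero hc2 (by simp [hf0]) hQ'.eventually_zero_right] with z h1 h2 h3
  rwa [h2, hft0, hgt0, h3] at h1

end Dual

theorem jacz_mulVec {f : (Fin n → ℂ) → ℂ → Fin n → ℂ} {z : Fin n → ℂ}
    (hf : DifferentiableAt ℂ (fun z => f z 0) z) (v : Fin n → ℂ) :
    (jacz f z).mulVec v = fderiv ℂ (fun z => f z 0) z v := by
  funext i
  conv_rhs => rw [pi_eq_sum_univ' v]
  simp only [Matrix.mulVec, dotProduct, jacz, Matrix.of_apply, pd, map_sum, map_smul,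
    Finset.sum_apply, Pi.smul_apply, smul_eq_mul]
  refine Finset.sum_congr rfl fun j _ => ?_
  rw [fderiv_pi (differentiableAt_pi.1 hf), mul_comm]
  rfl

section

variable {Q Q' : (Fin n → ℂ) → (Fin n → ℂ) → ℂ → ℂ}
  {f ft : (Fin n → ℂ) → ℂ → Fin n → ℂ} {g gt : (Fin n → ℂ) → ℂ → ℂ}

theorem IsHSPM.eventually_eq_of_degenerate {X : Type*} [NormedAddCommGroup X] [NormedSpace ℂ X]
    (hQ' : IsNormalDF Q') (h : IsHSPM Q Q' f g ft gt)
    {q : (Fin n → ℂ) × X → ℂ} {φ : X → Fin n → ℂ}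
    (hq : AnalyticAt ℂ q 0) (hφ : AnalyticAt ℂ φ 0) (hq0 : q 0 = 0) (hφ0 : φ 0 = 0)
    (hker : ∀ᶠ e in 𝓝 (0 : X), ∃ v ≠ 0, fderiv ℂ φ e v = 0)
    (hnd : ∀ r > 0, ∀ᶠ e in 𝓝 (0 : X), ∀ v ≠ 0, ∃ χ ∈ Metric.ball (0 : Fin n → ℂ) r,
      fderiv ℂ (fun e => q (χ, e)) e v ≠ 0)
    (hid : ∀ᶠ p in 𝓝 (0 : (Fin n → ℂ) × X), g p.1 (q p) = Q' (f p.1 (q p)) (φ p.2) 0) :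
    (∀ᶠ p in 𝓝 (0 : (Fin n → ℂ) × ℂ), g p.1 p.2 = 0) ∧
      ∀ᶠ p in 𝓝 (0 : (Fin n → ℂ) × ℂ × X), Q' (f p.1 p.2.1) (φ p.2.2) 0 = 0 := by
  obtain ⟨hf, hg, -, -, hf0, hg0, -⟩ := h
  have hpr : AnalyticAt ℂ (fun p : (Fin n → ℂ) × ℂ × (Fin n → ℂ) => (p.1, p.2.1)) 0 :=
    analyticAt_of_contDiffAt (by fun_prop)
  have hga : AnalyticAt ℂ (fun p : (Fin n → ℂ) × ℂ × (Fin n → ℂ) => g p.1 p.2.1) 0 :=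
    AnalyticAt.comp_of_eq (f := fun p : (Fin n → ℂ) × ℂ × (Fin n → ℂ) => (p.1, p.2.1))
      hg.self_of_nhds hpr rfl
  have hfa : AnalyticAt ℂ (fun p : (Fin n → ℂ) × ℂ × (Fin n → ℂ) => f p.1 p.2.1) 0 :=
    AnalyticAt.comp_of_eq (f := fun p : (Fin n → ℂ) × ℂ × (Fin n → ℂ) => (p.1, p.2.1))
      hf.self_of_nhds hpr rfl
  have hQa : AnalyticAt ℂ
      (fun p : (Fin n → ℂ) × ℂ × (Fin n → ℂ) => Q' (f p.1 p.2.1) p.2.2 0) 0 :=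
    AnalyticAt.comp_of_eq
      (f := fun p : (Fin n → ℂ) × ℂ × (Fin n → ℂ) => (f p.1 p.2.1, p.2.2, (0 : ℂ)))
      hQ'.analyticAt
      (hfa.prod ((analyticAt_snd.comp analyticAt_snd).prod analyticAt_const)) (by simp [hf0])
  have key := eventually_eq_zero_of_degenerate
    (Φ := fun p : (Fin n → ℂ) × ℂ × (Fin n → ℂ) => g p.1 p.2.1 - Q' (f p.1 p.2.1) p.2.2 0)
    (hga.sub hQa) hq hφ hq0 hφ0 hker hnd (hid.mono fun p hp => sub_eq_zero.2 hp)
  have hg' : ∀ᶠ p in 𝓝 (0 : (Fin n → ℂ) × ℂ), g p.1 p.2 = 0 := by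
    have hc : ContinuousAt (fun p : (Fin n → ℂ) × ℂ => (p.1, p.2, (0 : X))) 0 := by fun_prop
    have hc' : ContinuousAt (fun p : (Fin n → ℂ) × ℂ => (f p.1 p.2, (0 : ℂ))) 0 :=
      hf.self_of_nhds.continuousAt.prodMk continuousAt_const
    filter_upwards [eventually_comp_zero hc rfl key,
      eventually_comp_zero hc' (by simp [hf0]) hQ'.eventually_zero_right] with p h1 h2
    rw [hφ0, h2, sub_zero] at h1
    exact h1
  refine ⟨hg', ?_⟩
  have hc : ContinuousAt (fun p : (Fin n → ℂ) × ℂ × X => (p.1, p.2.1)) 0 := by fun_prop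
  filter_upwards [key, eventually_comp_zero hc rfl hg'] with p h1 h2
  rw [h2, zero_sub, neg_eq_zero] at h1
  exact h1

theorem IsHSPM.null_of_gt_eq_zero (hQ : IsNormalDF Q) (hnd : SegreNondeg Q) (hQ' : IsNormalDF Q')
    (h : IsHSPM Q Q' f g ft gt) (hgt : ∀ᶠ p in 𝓝 (0 : (Fin n → ℂ) × ℂ), gt p.1 p.2 = 0) :
    (∀ᶠ p in 𝓝 (0 : (Fin n → ℂ) × ℂ), g p.1 p.2 = 0) ∧
      ∀ᶠ p in 𝓝 (0 : (Fin n → ℂ) × ℂ × (Fin n → ℂ) × ℂ),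
        Q' (f p.1 p.2.1) (ft p.2.2.1 p.2.2.2) 0 = 0 := by
  refine h.eventually_eq_of_degenerate hQ' (φ := fun p : (Fin n → ℂ) × ℂ => ft p.1 p.2)
    hQ.analyticAt h.2.2.1.self_of_nhds hQ.apply_zero h.2.2.2.2.2.2.1
    (Eventually.of_forall fun p => ?_) (fun r hr => hnd.eventually_covec_ne_zero hQ hr) ?_
  · have := LinearMap.ker_ne_bot_of_finrank_lt
      (f := (fderiv ℂ (fun p : (Fin n → ℂ) × ℂ => ft p.1 p.2) p : (Fin n → ℂ) × ℂ →ₗ[ℂ] Fin n → ℂ))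
      (by simp)
    obtain ⟨v, hv, hv0⟩ := Submodule.exists_mem_ne_zero_of_ne_bot this
    exact ⟨v, hv0, hv⟩
  · have hc : ContinuousAt (fun p : (Fin n → ℂ) × (Fin n → ℂ) × ℂ => p.2) 0 := by fun_prop
    filter_upwards [h.2.2.2.2.2.2.2.2, eventually_comp_zero hc rfl hgt] with p h1 h2
    rw [h2] at h1
    exact h1

theorem IsHSPM.g_eq_zero_of_det (hQ : IsNormalDF Q) (hnd : SegreNondeg Q) (hQ' : IsNormalDF Q')
    (h : IsHSPM Q Q' f g ft gt) (hgt : ∀ᶠ χ in 𝓝 0, gt χ 0 = 0)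
    (hdet : ∀ᶠ χ in 𝓝 0, (jacz ft χ).det = 0) :
    ∀ᶠ p in 𝓝 (0 : (Fin n → ℂ) × ℂ), g p.1 p.2 = 0 := by
  have hc1 : ContinuousAt (fun χ : Fin n → ℂ => (χ, (0 : ℂ))) 0 := by fun_prop
  refine (h.eventually_eq_of_degenerate hQ' (q := fun p => Q p.1 p.2 0) (φ := fun χ => ft χ 0)
    hQ.analyticAt_slice
    (AnalyticAt.comp_of_eq (f := fun χ : Fin n → ℂ => (χ, (0 : ℂ))) h.2.2.1.self_of_nhds
      (analyticAt_id.prod analyticAt_const) rfl) hQ.apply_zero h.2.2.2.2.2.2.1 ?_ ?_ ?_).1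
  · filter_upwards [hdet, eventually_comp_zero hc1 rfl h.2.2.1] with χ h1 h2
    obtain ⟨v, hv0, hv⟩ := Matrix.exists_mulVec_eq_zero_iff.2 h1
    rw [jacz_mulVec] at hv
    · exact ⟨v, hv0, hv⟩
    · exact DifferentiableAt.comp (f := fun χ : Fin n → ℂ => (χ, (0 : ℂ))) χ h2.differentiableAt
        (by fun_prop)
  · intro r hr
    obtain ⟨ρ, hρ, ha⟩ := hQ.exists_analyticOnNhd
    filter_upwards [eventually_comp_zero hc1 rfl
      (hnd.eventually_covec_ne_zero hQ (lt_min hr hρ)), Metric.ball_mem_nhds 0 hρ] with χ h1 h2 v hv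
    obtain ⟨z, hz, hzv⟩ := h1 (v, 0) (fun h => hv (congrArg Prod.fst h))
    refine ⟨z, Metric.ball_subset_ball (min_le_left _ _) hz, ?_⟩
    rwa [covec_slice]
    exact ha _ (mk_mem_ball_zero (Metric.ball_subset_ball (min_le_right _ _) hz)
      (mk_mem_ball_zero h2 (Metric.mem_ball_self hρ)))
  · have hc : ContinuousAt (fun p : (Fin n → ℂ) × (Fin n → ℂ) => (p.1, p.2, (0 : ℂ))) 0 := by
      fun_prop
    have hc' : ContinuousAt (fun p : (Fin n → ℂ) × (Fin n → ℂ) => p.2) 0 := by fun_prop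
    filter_upwards [eventually_comp_zero hc rfl h.2.2.2.2.2.2.2.2,
      eventually_comp_zero hc' rfl hgt] with p h1 h2
    rw [h2] at h1
    exact h1

end

section Jacobian

theorem analyticAt_det {X ι : Type*} [NormedAddCommGroup X] [NormedSpace ℂ X] [Fintype ι]
    [DecidableEq ι] {A : X → Matrix ι ι ℂ} {x : X}
    (h : ∀ i j, AnalyticAt ℂ (fun x => A x i j) x) : AnalyticAt ℂ (fun x => (A x).det) x := by
  simp only [Matrix.det_apply']
  exact Finset.analyticAt_fun_sum _ fun σ _ =>
    analyticAt_const.mul (Finset.analyticAt_fun_prod _ fun i _ => h _ _)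

theorem iterate_dirDeriv_clm {X Y Z : Type*} [NormedAddCommGroup X] [NormedSpace ℂ X]
    [NormedAddCommGroup Y] [NormedSpace ℂ Y] [CompleteSpace Y]
    [NormedAddCommGroup Z] [NormedSpace ℂ Z]
    {F : X → Y} {U : Set X} (hU : IsOpen U) (hF : AnalyticOnNhd ℂ F U) (L : Y →L[ℂ] Z) (v : X)
    (j : ℕ) :
    Set.EqOn ((dirDeriv v)^[j] fun x => L (F x)) (fun x => L ((dirDeriv v)^[j] F x)) U := by
  induction j with
  | zero => exact fun _ _ => rfl
  | succ j ih =>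
    intro x hx
    rw [Function.iterate_succ_apply', dirDeriv_congr hU ih v hx, Function.iterate_succ_apply']
    exact DFunLike.congr_fun
      (L.hasFDerivAt.comp x (hF.iterate_dirDeriv v j x hx).differentiableAt.hasFDerivAt).fderiv v

theorem eventually_ker_inter_ker_eq_zero {E F : Type*} [NormedAddCommGroup E] [NormedSpace ℂ E]
    [FiniteDimensional ℂ E] [NormedAddCommGroup F] [NormedSpace ℂ F] [CompleteSpace F]
    {φ : E × ℂ → F} {γ : E × ℂ → ℂ} {U : Set (E × ℂ)} (hU : IsOpen U) (hφ : AnalyticOnNhd ℂ φ U)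
    (hγ : AnalyticOnNhd ℂ γ U) {z : E} (hz : (z, (0 : ℂ)) ∈ U) {m : ℕ}
    (hinj : ∀ a, fderiv ℂ φ (z, 0) (a, 0) = 0 → a = 0)
    (hlt : ∀ j ≤ m, ∀ᶠ z' in 𝓝 z, (dirDeriv ((0 : E), (1 : ℂ)))^[j] γ (z', 0) = 0)
    (hm : (dirDeriv ((0 : E), (1 : ℂ)))^[m + 1] γ (z, 0) ≠ 0) :
    ∀ᶠ w in 𝓝[≠] (0 : ℂ), ∀ v, fderiv ℂ φ (z, w) v = 0 → fderiv ℂ γ (z, w) v = 0 → v = 0 := by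
  have hline : ∀ w : ℂ, (z, (0 : ℂ)) + w • ((0 : E), (1 : ℂ)) = (z, w) := fun w => by simp
  obtain ⟨ν, hν, hνeq, hν0⟩ := exists_eq_pow_smul_of_iterate_dirDeriv hU
    (hγ.dirDeriv ((0 : E), (1 : ℂ))) hz (v := ((0 : E), (1 : ℂ))) (m := m)
    (fun j hj => (hlt (j + 1) hj).self_of_nhds)
  replace hν0 := hν0 hm
  let L : (E × ℂ →L[ℂ] ℂ) →L[ℂ] (E →L[ℂ] ℂ) :=
    (ContinuousLinearMap.compL ℂ E (E × ℂ) ℂ).flip (ContinuousLinearMap.inl ℂ E ℂ)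
  have hLa : AnalyticOnNhd ℂ (fun p => L (fderiv ℂ γ p)) U := fun p hp =>
    (L.analyticAt _).comp (hγ p hp).fderiv
  obtain ⟨ζ, hζ, hζeq, -⟩ := exists_eq_pow_smul_of_iterate_dirDeriv hU hLa hz
    (v := ((0 : E), (1 : ℂ))) (m := m + 1) fun j hj => by
      rw [iterate_dirDeriv_clm hU hγ.fderiv L _ j hz]
      beta_reduce
      rw [← fderiv_iterate_dirDeriv hU hγ _ j hz]
      have h1 := HasFDerivAt.comp (f := fun z' : E => (z', (0 : ℂ))) z
        (hγ.iterate_dirDeriv ((0 : E), (1 : ℂ)) j _ hz).differentiableAt.hasFDerivAt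
        (hasFDerivAt_prodMk_left z (0 : ℂ))
      have h2 : (dirDeriv ((0 : E), (1 : ℂ)))^[j] γ ∘ (fun z' => (z', (0 : ℂ))) =ᶠ[𝓝 z]
          fun _ => 0 := hlt j (Nat.lt_succ_iff.1 hj)
      exact h1.unique (h2.hasFDerivAt_iff.2 (hasFDerivAt_const 0 z))
  let T : ℂ → E × ℂ →L[ℂ] F × ℂ := fun w =>
    (ContinuousLinearMap.inl ℂ F ℂ).comp (fderiv ℂ φ (z, w)) +
      (ContinuousLinearMap.inr ℂ F ℂ).comp
        ((w • ζ w).comp (ContinuousLinearMap.fst ℂ E ℂ) + ν w • ContinuousLinearMap.snd ℂ E ℂ)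
  have hT : ContinuousAt T 0 := by
    have h1 : ContinuousAt (fun w => fderiv ℂ φ (z, w)) 0 :=
      ContinuousAt.comp (f := fun w : ℂ => (z, w)) (hφ _ hz).fderiv.continuousAt (by fun_prop)
    have h2 := hζ.continuousAt
    have h3 := hν.continuousAt
    exact (continuousAt_const.clm_comp h1).add (continuousAt_const.clm_comp
      (((continuousAt_id.smul h2).clm_comp continuousAt_const).add (h3.smul continuousAt_const)))
  have hT0 : Function.Injective (T 0) := by
    refine (injective_iff_map_eq_zero (T 0)).2 fun v hv => ?_
    have h1 : fderiv ℂ φ (z, 0) v = 0 := by simpa [T] using congrArg Prod.fst hv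
    have h2 : v.2 = 0 := by simpa [T, hν0] using congrArg Prod.snd hv
    have h3 : v = (v.1, 0) := Prod.ext rfl h2
    rw [h3] at h1
    exact Prod.ext (hinj _ h1) h2
  have hTe := hT.eventually (ContinuousLinearMap.isOpen_injective.mem_nhds hT0)
  rw [eventually_nhdsWithin_iff]
  filter_upwards [hTe, hνeq, hζeq] with w h1 h2 h3 hw v hv1 hv2
  rw [hline] at h2 h3
  refine h1 ?_
  rw [map_zero]
  have h4 : fderiv ℂ γ (z, w) v = w ^ m * (w * ζ w v.1 + ν w * v.2) := by
    have h5 : v = (v.1, 0) + v.2 • (0, 1) := by simp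
    have h6 : fderiv ℂ γ (z, w) (v.1, 0) = w ^ (m + 1) * ζ w v.1 := DFunLike.congr_fun h3 v.1
    have h7 : fderiv ℂ γ (z, w) (0, 1) = w ^ m * ν w := h2
    conv_lhs => rw [h5]
    rw [map_add, map_smul, h6, h7, smul_eq_mul]
    ring
  rw [h4, mul_eq_zero, or_iff_right (pow_ne_zero m hw)] at hv2
  simp [T, hv1, hv2]

/-- The common kernel of the differentials of `f` and `g` at `p` is trivial. -/
def JacInjective (f : (Fin n → ℂ) → ℂ → Fin n → ℂ) (g : (Fin n → ℂ) → ℂ → ℂ)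
    (p : (Fin n → ℂ) × ℂ) : Prop :=
  ∀ v, fderiv ℂ (fun q : (Fin n → ℂ) × ℂ => f q.1 q.2) p v = 0 →
    fderiv ℂ (fun q : (Fin n → ℂ) × ℂ => g q.1 q.2) p v = 0 → v = 0

variable {f : (Fin n → ℂ) → ℂ → Fin n → ℂ} {g : (Fin n → ℂ) → ℂ → ℂ}

theorem hasFDerivAt_slice {Y : Type*} [NormedAddCommGroup Y] [NormedSpace ℂ Y]
    {φ : (Fin n → ℂ) → ℂ → Y} {z : Fin n → ℂ} {w : ℂ}
    (h : DifferentiableAt ℂ (fun q : (Fin n → ℂ) × ℂ => φ q.1 q.2) (z, w)) :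
    HasFDerivAt (fun z => φ z w) ((fderiv ℂ (fun q : (Fin n → ℂ) × ℂ => φ q.1 q.2) (z, w)).comp
      (ContinuousLinearMap.inl ℂ _ _)) z :=
  HasFDerivAt.comp (f := fun z : Fin n → ℂ => (z, w)) z h.hasFDerivAt (hasFDerivAt_prodMk_left z w)

theorem JacInjective.eventually {p : (Fin n → ℂ) × ℂ}
    (hf : AnalyticAt ℂ (fun q : (Fin n → ℂ) × ℂ => f q.1 q.2) p)
    (hg : AnalyticAt ℂ (fun q : (Fin n → ℂ) × ℂ => g q.1 q.2) p) (h : JacInjective f g p) :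
    ∀ᶠ q in 𝓝 p, JacInjective f g q := by
  let T : (Fin n → ℂ) × ℂ → (Fin n → ℂ) × ℂ →L[ℂ] (Fin n → ℂ) × ℂ := fun q =>
    (ContinuousLinearMap.inl ℂ (Fin n → ℂ) ℂ).comp
        (fderiv ℂ (fun q : (Fin n → ℂ) × ℂ => f q.1 q.2) q) +
      (ContinuousLinearMap.inr ℂ (Fin n → ℂ) ℂ).comp
        (fderiv ℂ (fun q : (Fin n → ℂ) × ℂ => g q.1 q.2) q)
  have hT : ContinuousAt T p := (continuousAt_const.clm_comp hf.fderiv.continuousAt).add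
    (continuousAt_const.clm_comp hg.fderiv.continuousAt)
  have hTv : ∀ q v, T q v = (fderiv ℂ (fun q : (Fin n → ℂ) × ℂ => f q.1 q.2) q v,
      fderiv ℂ (fun q : (Fin n → ℂ) × ℂ => g q.1 q.2) q v) := fun q v => by simp [T]
  have hinj : Function.Injective (T p) := (injective_iff_map_eq_zero (T p)).2 fun v hv => by
    rw [hTv] at hv
    exact h v (congrArg Prod.fst hv) (congrArg Prod.snd hv)
  filter_upwards [hT.eventually (ContinuousLinearMap.isOpen_injective.mem_nhds hinj)]
    with q hq v h1 h2
  refine hq ?_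
  rw [map_zero, hTv, h1, h2]
  rfl

theorem exists_isOpen_jacInjective
    (hf : AnalyticAt ℂ (fun q : (Fin n → ℂ) × ℂ => f q.1 q.2) 0)
    (hg : AnalyticAt ℂ (fun q : (Fin n → ℂ) × ℂ => g q.1 q.2) 0)
    (hg0 : ∀ᶠ z in 𝓝 0, g z 0 = 0)
    (hne : ¬ ∀ᶠ p in 𝓝 (0 : (Fin n → ℂ) × ℂ), g p.1 p.2 = 0)
    (hdet : ¬ ∀ᶠ z in 𝓝 0, (jacz f z).det = 0) {r : ℝ} (hr : 0 < r) :
    ∃ N : Set (Fin n → ℂ), IsOpen N ∧ N ⊆ Metric.ball 0 r ∧ N.Nonempty ∧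
      ∀ z ∈ N, ∀ᶠ w in 𝓝[≠] (0 : ℂ), JacInjective f g (z, w) := by
  obtain ⟨s, hs, hfg⟩ := Metric.eventually_nhds_iff_ball.1
    (hf.eventually_analyticAt.and hg.eventually_analyticAt)
  set ρ := min r s
  have hρ : 0 < ρ := lt_min hr hs
  have hsub : Metric.ball (0 : (Fin n → ℂ) × ℂ) ρ ⊆ Metric.ball 0 s :=
    Metric.ball_subset_ball (min_le_right _ _)
  have hfa : AnalyticOnNhd ℂ (fun q : (Fin n → ℂ) × ℂ => f q.1 q.2) (Metric.ball 0 ρ) :=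
    fun p hp => (hfg p (hsub hp)).1
  have hga : AnalyticOnNhd ℂ (fun q : (Fin n → ℂ) × ℂ => g q.1 q.2) (Metric.ball 0 ρ) :=
    fun p hp => (hfg p (hsub hp)).2
  have hmem : ∀ z ∈ Metric.ball (0 : Fin n → ℂ) ρ, (z, (0 : ℂ)) ∈ Metric.ball 0 ρ := fun z hz =>
    mk_mem_ball_zero hz (Metric.mem_ball_self hρ)
  set W : ℕ → (Fin n → ℂ) → ℂ := fun j z =>
    (dirDeriv ((0 : Fin n → ℂ), (1 : ℂ)))^[j] (fun q : (Fin n → ℂ) × ℂ => g q.1 q.2) (z, 0)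
  have hW : ∀ j, AnalyticOnNhd ℂ (W j) (Metric.ball 0 ρ) := fun j z hz =>
    AnalyticAt.comp_of_eq (f := fun z : Fin n → ℂ => (z, (0 : ℂ)))
      (hga.iterate_dirDeriv _ j _ (hmem z hz)) (analyticAt_id.prod analyticAt_const) rfl
  have hWz : ∀ j, (∀ᶠ z in 𝓝 0, W j z = 0) → ∀ z ∈ Metric.ball (0 : Fin n → ℂ) ρ, W j z = 0 :=
    fun j hj => (hW j).eqOn_zero_of_preconnected_of_eventuallyEq_zero
      (convex_ball _ _).isPreconnected (Metric.mem_ball_self hρ) hj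
  have hex : ∃ j, ¬ ∀ᶠ z in 𝓝 0, W j z = 0 := by
    by_contra! hall
    refine hne ?_
    filter_upwards [Metric.ball_mem_nhds 0 hρ] with p hp
    have hp1 : p.1 ∈ Metric.ball (0 : Fin n → ℂ) ρ := by
      rw [mem_ball_zero_iff] at hp ⊢
      exact (norm_fst_le p).trans_lt hp
    have hpl : (p.1, (0 : ℂ)) + p.2 • ((0 : Fin n → ℂ), (1 : ℂ)) = p := by simp
    have := eq_zero_of_iterate_dirDeriv_eq_zero Metric.isOpen_ball (convex_ball _ _) hga
      (hmem p.1 hp1) (v := ((0 : Fin n → ℂ), (1 : ℂ))) (t := p.2)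
      (fun j => hWz j (hall j) p.1 hp1) (by rwa [hpl])
    rwa [hpl] at this
  classical
  obtain ⟨m, hm⟩ : ∃ m, Nat.find hex = m + 1 :=
    Nat.exists_eq_succ_of_ne_zero fun h0 => (h0 ▸ Nat.find_spec hex) hg0
  have hWm := Nat.find_spec hex
  rw [hm] at hWm
  have hlt : ∀ j ≤ m, ∀ z ∈ Metric.ball (0 : Fin n → ℂ) ρ, W j z = 0 := fun j hj =>
    hWz j (not_not.1 (Nat.find_min hex (hm ▸ Nat.lt_succ_iff.2 hj)))
  have hda : AnalyticOnNhd ℂ (fun z => (jacz f z).det) (Metric.ball 0 ρ) := fun z hz => by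
    refine analyticAt_det fun i j => ?_
    have h1 : AnalyticAt ℂ (fun z => f z 0) z :=
      AnalyticAt.comp_of_eq (f := fun z : Fin n → ℂ => (z, (0 : ℂ)))
        (hfa _ (hmem z hz)) (analyticAt_id.prod analyticAt_const) rfl
    have h2 : AnalyticAt ℂ (fun z => f z 0 i) z :=
      ((ContinuousLinearMap.proj (R := ℂ) (φ := fun _ : Fin n => ℂ) i).analyticAt _).comp h1
    exact ((ContinuousLinearMap.apply ℂ ℂ (Pi.single j 1 : Fin n → ℂ)).analyticAt _).comp h2.fderiv
  obtain ⟨x, hx, hdx⟩ : ∃ x ∈ Metric.ball (0 : Fin n → ℂ) ρ, (jacz f x).det ≠ 0 := by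
    by_contra! hcon
    exact hdet (by filter_upwards [Metric.ball_mem_nhds 0 hρ] using hcon)
  have hprod : ∃ z ∈ Metric.ball (0 : Fin n → ℂ) ρ, W (m + 1) z * (jacz f z).det ≠ 0 := by
    by_contra! hcon
    have := eqOn_zero_of_eventually_mul_eq_zero Metric.isOpen_ball (convex_ball _ _) (hW (m + 1))
      hda.continuousOn hcon ⟨x, hx, hdx⟩
    exact hWm (by filter_upwards [Metric.ball_mem_nhds 0 hρ] using this)
  obtain ⟨z₀, hz₀, hz₀'⟩ := hprod
  refine ⟨Metric.ball 0 ρ ∩ (fun z => W (m + 1) z * (jacz f z).det) ⁻¹' {0}ᶜ,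
    ((hW (m + 1)).continuousOn.mul hda.continuousOn).isOpen_inter_preimage Metric.isOpen_ball
      isOpen_compl_singleton,
    Set.inter_subset_left.trans (Metric.ball_subset_ball (min_le_left _ _)), ⟨z₀, hz₀, hz₀'⟩, ?_⟩
  rintro z ⟨hz, hz'⟩
  obtain ⟨h1, h2⟩ := mul_ne_zero_iff.1 hz'
  refine eventually_ker_inter_ker_eq_zero Metric.isOpen_ball hfa hga (hmem z hz) (m := m)
    (fun a ha => ?_) (fun j hj => ?_) h1
  · have h3 := hasFDerivAt_slice (φ := f) (hfa _ (hmem z hz)).differentiableAt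
    by_contra ha0
    refine h2 (Matrix.exists_mulVec_eq_zero_iff.1 ⟨a, ha0, ?_⟩)
    rw [jacz_mulVec h3.differentiableAt, h3.fderiv]
    exact ha
  · filter_upwards [Metric.isOpen_ball.mem_nhds hz] using hlt j hj

end Jacobian

section FullJacobian

variable {f : (Fin n → ℂ) → ℂ → Fin n → ℂ} {g : (Fin n → ℂ) → ℂ → ℂ}

theorem dirCT_castSucc (i : Fin n) : dirCT n i.castSucc = (Pi.single i 1, 0) := by
  simp [dirCT]

theorem dirCT_last : dirCT n (Fin.last n) = (0, 1) := by
  simp [dirCT]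

theorem sum_smul_dirCT (c : Fin (n + 1) → ℂ) :
    ∑ k, c k • dirCT n k = (fun i => c i.castSucc, c (Fin.last n)) := by
  rw [Fin.sum_univ_castSucc, dirCT_last]
  simp only [dirCT_castSucc]
  refine Prod.ext ?_ ?_
  · rw [pi_eq_sum_univ' (fun i : Fin n => c i.castSucc)]
    simp [Prod.fst_sum]
  · simp [Prod.snd_sum]

theorem jacFull_mulVec {p : (Fin n → ℂ) × ℂ}
    (hf : DifferentiableAt ℂ (fun q : (Fin n → ℂ) × ℂ => f q.1 q.2) p) (c : Fin (n + 1) → ℂ) :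
    (jacFull f g p).mulVec c =
      Fin.snoc (α := fun _ => ℂ)
        (fderiv ℂ (fun q : (Fin n → ℂ) × ℂ => f q.1 q.2) p
          (fun i => c i.castSucc, c (Fin.last n)))
        (fderiv ℂ (fun q : (Fin n → ℂ) × ℂ => g q.1 q.2) p
          (fun i => c i.castSucc, c (Fin.last n))) := by
  rw [← sum_smul_dirCT]
  funext i
  refine Fin.lastCases ?_ (fun i => ?_) i
  · simp [Matrix.mulVec, dotProduct, jacFull, map_sum, mul_comm]
  · simp [Matrix.mulVec, dotProduct, jacFull, map_sum, mul_comm,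
      fderiv_pi (differentiableAt_pi.1 hf)]

theorem exists_ker_of_det_jacFull_eq_zero {p : (Fin n → ℂ) × ℂ}
    (hf : DifferentiableAt ℂ (fun q : (Fin n → ℂ) × ℂ => f q.1 q.2) p)
    (h : (jacFull f g p).det = 0) :
    ∃ v ≠ 0, fderiv ℂ (fun q : (Fin n → ℂ) × ℂ => f q.1 q.2) p v = 0 ∧
      fderiv ℂ (fun q : (Fin n → ℂ) × ℂ => g q.1 q.2) p v = 0 := by
  obtain ⟨c, hc0, hc⟩ := Matrix.exists_mulVec_eq_zero_iff.2 h
  rw [jacFull_mulVec hf] at hc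
  refine ⟨_, fun h0 => hc0 ?_, ?_, by simpa using congrFun hc (Fin.last n)⟩
  · funext i
    refine Fin.lastCases ?_ (fun i => ?_) i
    · exact congrArg Prod.snd h0
    · exact congrFun (congrArg Prod.fst h0) i
  · funext i
    simpa using congrFun hc i.castSucc

theorem analyticAt_det_jacFull {p : (Fin n → ℂ) × ℂ}
    (hf : AnalyticAt ℂ (fun q : (Fin n → ℂ) × ℂ => f q.1 q.2) p)
    (hg : AnalyticAt ℂ (fun q : (Fin n → ℂ) × ℂ => g q.1 q.2) p) :
    AnalyticAt ℂ (fun p => (jacFull f g p).det) p := by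
  refine analyticAt_det fun i j => ?_
  refine ((ContinuousLinearMap.apply ℂ ℂ (dirCT n j)).analyticAt _).comp (AnalyticAt.fderiv ?_)
  refine Fin.lastCases ?_ (fun i => ?_) i
  · simpa using hg
  · simp only [Fin.snoc_castSucc]
    exact ((ContinuousLinearMap.proj (R := ℂ) (φ := fun _ : Fin n => ℂ) i).analyticAt _).comp hf

theorem det_jacFull_zero (hf : DifferentiableAt ℂ (fun q : (Fin n → ℂ) × ℂ => f q.1 q.2) 0)
    (hg : DifferentiableAt ℂ (fun q : (Fin n → ℂ) × ℂ => g q.1 q.2) 0)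
    (hg0 : ∀ᶠ z in 𝓝 0, g z 0 = 0) :
    (jacFull f g 0).det = (jacz f 0).det * deriv (fun w => g 0 w) 0 := by
  have hz : ∀ v, fderiv ℂ (fun q : (Fin n → ℂ) × ℂ => g q.1 q.2) 0 (v, 0) = 0 := fun v => by
    have h1 : (fun z => g z 0) =ᶠ[𝓝 0] fun _ => 0 := hg0
    exact DFunLike.congr_fun ((hasFDerivAt_slice (φ := g) hg).unique
      (h1.hasFDerivAt_iff.2 (hasFDerivAt_const 0 0))) v
  have hw : fderiv ℂ (fun q : (Fin n → ℂ) × ℂ => g q.1 q.2) 0 (0, 1) =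
      deriv (fun w => g 0 w) 0 :=
    (HasFDerivAt.comp_hasDerivAt (f := fun w : ℂ => ((0 : Fin n → ℂ), w)) 0 hg.hasFDerivAt
      ((hasDerivAt_const 0 _).prodMk (hasDerivAt_id 0))).deriv.symm
  rw [Matrix.det_succ_row _ (Fin.last n), Fin.sum_univ_castSucc, Finset.sum_eq_zero, zero_add,
    mul_comm (jacz f 0).det]
  · have h1 : (jacFull f g 0).submatrix (Fin.last n).succAbove (Fin.last n).succAbove =
        jacz f 0 := by
      ext i j
      have hs : DifferentiableAt ℂ (fun q : (Fin n → ℂ) × ℂ => f q.1 q.2 i) ((0 : Fin n → ℂ), (0 : ℂ)) :=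
        differentiableAt_pi.1 hf i
      simp only [jacFull, jacz, Matrix.submatrix_apply, Fin.succAbove_last, Matrix.of_apply,
        Fin.snoc_castSucc, dirCT_castSucc, pd]
      rw [(hasFDerivAt_slice (φ := fun z w => f z w i) hs).fderiv]
      rfl
    rw [h1]
    simp [jacFull, dirCT_last, hw, ← two_mul]
  · intro j _
    simp [jacFull, dirCT_castSucc, hz]

end FullJacobian

section SegreMaps

variable {Q Q' : (Fin n → ℂ) → (Fin n → ℂ) → ℂ → ℂ}
  {f ft : (Fin n → ℂ) → ℂ → Fin n → ℂ} {g gt : (Fin n → ℂ) → ℂ → ℂ}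

theorem IsNormalDF.eventually_apply_zero (hQ : IsNormalDF Q) : ∀ᶠ z in 𝓝 0, Q z 0 0 = 0 := by
  have hc : ContinuousAt (fun z : Fin n → ℂ => (z, (0 : ℂ))) 0 := by fun_prop
  exact eventually_comp_zero hc rfl hQ.eventually_zero_right

theorem fderiv_apply_eq_add {q : (Fin n → ℂ) × (Fin n → ℂ) × ℂ}
    (h : AnalyticAt ℂ (fun q : (Fin n → ℂ) × (Fin n → ℂ) × ℂ => Q q.1 q.2.1 q.2.2) q)
    (a : Fin n → ℂ) (v : (Fin n → ℂ) × ℂ) :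
    fderiv ℂ (fun q : (Fin n → ℂ) × (Fin n → ℂ) × ℂ => Q q.1 q.2.1 q.2.2) q (a, v) =
      fderiv ℂ (fun q : (Fin n → ℂ) × (Fin n → ℂ) × ℂ => Q q.1 q.2.1 q.2.2) q (a, 0) +
        covec Q q.1 q.2 v := by
  have h1 : (a, v) = (a, 0) + ((0 : Fin n → ℂ), v) := by simp
  rw [covec_eq h, h1, map_add]
  rfl

/-- The differential of the identity defining a Segre preserving map. -/
theorem IsHSPM.eventually_fderiv (hQ : IsNormalDF Q) (hQ' : IsNormalDF Q')
    (h : IsHSPM Q Q' f g ft gt) :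
    ∀ᶠ q in 𝓝 (0 : (Fin n → ℂ) × (Fin n → ℂ) × ℂ), ∀ a v,
      fderiv ℂ (fun q : (Fin n → ℂ) × ℂ => g q.1 q.2) (q.1, Q q.1 q.2.1 q.2.2)
        (a, fderiv ℂ (fun q : (Fin n → ℂ) × (Fin n → ℂ) × ℂ => Q q.1 q.2.1 q.2.2) q (a, v)) =
      fderiv ℂ (fun q : (Fin n → ℂ) × (Fin n → ℂ) × ℂ => Q' q.1 q.2.1 q.2.2)
        (f q.1 (Q q.1 q.2.1 q.2.2), ft q.2.1 q.2.2, gt q.2.1 q.2.2)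
        (fderiv ℂ (fun q : (Fin n → ℂ) × ℂ => f q.1 q.2) (q.1, Q q.1 q.2.1 q.2.2)
          (a, fderiv ℂ (fun q : (Fin n → ℂ) × (Fin n → ℂ) × ℂ => Q q.1 q.2.1 q.2.2) q (a, v)),
        fderiv ℂ (fun q : (Fin n → ℂ) × ℂ => ft q.1 q.2) q.2 v,
        fderiv ℂ (fun q : (Fin n → ℂ) × ℂ => gt q.1 q.2) q.2 v) := by
  obtain ⟨hf, hg, hft, hgt, hf0, hg0, hft0, hgt0, hid⟩ := h
  have hc1 : ContinuousAt (fun q : (Fin n → ℂ) × (Fin n → ℂ) × ℂ => (q.1, Q q.1 q.2.1 q.2.2)) 0 :=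
    continuousAt_fst.prodMk hQ.analyticAt.continuousAt
  have hc10 : (fun q : (Fin n → ℂ) × (Fin n → ℂ) × ℂ => (q.1, Q q.1 q.2.1 q.2.2)) 0 = 0 :=
    Prod.ext rfl hQ.apply_zero
  have hc2 : ContinuousAt (fun q : (Fin n → ℂ) × (Fin n → ℂ) × ℂ => q.2) 0 := by fun_prop
  have hc3 : ContinuousAt (fun q : (Fin n → ℂ) × (Fin n → ℂ) × ℂ =>
      (f q.1 (Q q.1 q.2.1 q.2.2), ft q.2.1 q.2.2, gt q.2.1 q.2.2)) 0 :=
    (hf.self_of_nhds.continuousAt.comp_of_eq hc1 hc10).prodMk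
      ((hft.self_of_nhds.continuousAt.comp_of_eq hc2 rfl).prodMk
        (hgt.self_of_nhds.continuousAt.comp_of_eq hc2 rfl))
  have hc30 : (fun q : (Fin n → ℂ) × (Fin n → ℂ) × ℂ =>
      (f q.1 (Q q.1 q.2.1 q.2.2), ft q.2.1 q.2.2, gt q.2.1 q.2.2)) 0 = 0 := by
    simp [hQ.apply_zero, hf0, hft0, hgt0]
  filter_upwards [hid.eventually_nhds, hQ.1, eventually_comp_zero hc1 hc10 hf,
    eventually_comp_zero hc1 hc10 hg, eventually_comp_zero hc2 rfl hft,
    eventually_comp_zero hc2 rfl hgt, eventually_comp_zero hc3 hc30 hQ'.1]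
    with q hidq hQq hfq hgq hftq hgtq hQ'q a v
  have d1 := hasFDerivAt_fst.prodMk hQq.differentiableAt.hasFDerivAt
  have d2 := HasFDerivAt.comp (f := fun q : (Fin n → ℂ) × (Fin n → ℂ) × ℂ =>
    (q.1, Q q.1 q.2.1 q.2.2)) q hgq.differentiableAt.hasFDerivAt d1
  have d3 := HasFDerivAt.comp (f := fun q : (Fin n → ℂ) × (Fin n → ℂ) × ℂ =>
    (q.1, Q q.1 q.2.1 q.2.2)) q hfq.differentiableAt.hasFDerivAt d1
  have d4 := HasFDerivAt.comp (f := fun q : (Fin n → ℂ) × (Fin n → ℂ) × ℂ => q.2) q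
    hftq.differentiableAt.hasFDerivAt hasFDerivAt_snd
  have d5 := HasFDerivAt.comp (f := fun q : (Fin n → ℂ) × (Fin n → ℂ) × ℂ => q.2) q
    hgtq.differentiableAt.hasFDerivAt hasFDerivAt_snd
  have d6 := HasFDerivAt.comp (f := fun q : (Fin n → ℂ) × (Fin n → ℂ) × ℂ =>
    (f q.1 (Q q.1 q.2.1 q.2.2), ft q.2.1 q.2.2, gt q.2.1 q.2.2)) q
    hQ'q.differentiableAt.hasFDerivAt (d3.prodMk (d4.prodMk d5))
  exact DFunLike.congr_fun (d2.unique
    ((show (fun q : (Fin n → ℂ) × (Fin n → ℂ) × ℂ => g q.1 (Q q.1 q.2.1 q.2.2)) =ᶠ[𝓝 q] _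
      from hidq).hasFDerivAt_iff.2 d6)) (a, v)

theorem IsHSPM.eventually_covec (hQ : IsNormalDF Q) (hQ' : IsNormalDF Q')
    (h : IsHSPM Q Q' f g ft gt) : ∀ᶠ z in 𝓝 0, ∀ v,
      fderiv ℂ (fun q : (Fin n → ℂ) × ℂ => g q.1 q.2) (z, 0) (0, 1) * covec Q z 0 v =
        covec Q' (f z 0) 0 (fderiv ℂ (fun q : (Fin n → ℂ) × ℂ => ft q.1 q.2) 0 v,
          fderiv ℂ (fun q : (Fin n → ℂ) × ℂ => gt q.1 q.2) 0 v) := by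
  have hd := h.eventually_fderiv hQ hQ'
  obtain ⟨hf, -, -, -, hf0, -, hft0, hgt0, -⟩ := h
  have hc : ContinuousAt (fun z : Fin n → ℂ => (z, (0 : Fin n → ℂ), (0 : ℂ))) 0 := by fun_prop
  have hc1 : ContinuousAt (fun z : Fin n → ℂ => (z, (0 : ℂ))) 0 := by fun_prop
  have hcf : ContinuousAt (fun z : Fin n → ℂ => f z 0) 0 :=
    ContinuousAt.comp (f := fun z : Fin n → ℂ => (z, (0 : ℂ))) (x := 0)
      hf.self_of_nhds.continuousAt hc1
  filter_upwards [eventually_comp_zero hc rfl hd, eventually_comp_zero hc rfl hQ.1,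
    hQ.eventually_apply_zero, eventually_comp_zero hcf hf0 hQ'.eventually_apply_zero.eventually_nhds,
    eventually_comp_zero (hc.comp_of_eq hcf hf0) (by simp [hf0]) hQ'.1] with z h1 h2 h3 h4 h5 v
  replace h5 : AnalyticAt ℂ (fun q : (Fin n → ℂ) × (Fin n → ℂ) × ℂ => Q' q.1 q.2.1 q.2.2)
      (f z 0, 0, 0) := h5
  have h6 := h1 0 v
  rw [fderiv_apply_eq_add h2] at h6
  simp only [Prod.mk_zero_zero, map_zero, zero_add] at h6
  rw [h3] at h6
  rw [hft0, hgt0, fderiv_apply_eq_add h5] at h6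
  have h7 : ∀ a : Fin n → ℂ, fderiv ℂ (fun q : (Fin n → ℂ) × (Fin n → ℂ) × ℂ => Q' q.1 q.2.1 q.2.2)
      (f z 0, 0, 0) (a, 0) = 0 := by
    have h8 := HasFDerivAt.comp (f := fun z' : Fin n → ℂ => (z', (0 : (Fin n → ℂ) × ℂ))) (f z 0)
      h5.differentiableAt.hasFDerivAt (hasFDerivAt_prodMk_left (f z 0) 0)
    have h9 : ((fun q : (Fin n → ℂ) × (Fin n → ℂ) × ℂ => Q' q.1 q.2.1 q.2.2) ∘
        fun z' : Fin n → ℂ => (z', (0 : (Fin n → ℂ) × ℂ))) =ᶠ[𝓝 (f z 0)] fun _ => 0 := h4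
    exact DFunLike.congr_fun (h8.unique (h9.hasFDerivAt_iff.2 (hasFDerivAt_const 0 _)))
  rw [h7, zero_add] at h6
  have h10 : ((0 : Fin n → ℂ), covec Q z 0 v) = covec Q z 0 v • (0, 1) := by simp
  rw [h10, map_smul, smul_eq_mul, mul_comm] at h6
  exact h6

theorem covec_eq_zero_of_jacInjective {q : (Fin n → ℂ) × (Fin n → ℂ) × ℂ} {v : (Fin n → ℂ) × ℂ}
    (hQ : AnalyticAt ℂ (fun q : (Fin n → ℂ) × (Fin n → ℂ) × ℂ => Q q.1 q.2.1 q.2.2) q)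
    (hv : fderiv ℂ (fun q : (Fin n → ℂ) × ℂ => ft q.1 q.2) q.2 v = 0)
    (hv' : fderiv ℂ (fun q : (Fin n → ℂ) × ℂ => gt q.1 q.2) q.2 v = 0)
    (hd : ∀ a v,
      fderiv ℂ (fun q : (Fin n → ℂ) × ℂ => g q.1 q.2) (q.1, Q q.1 q.2.1 q.2.2)
        (a, fderiv ℂ (fun q : (Fin n → ℂ) × (Fin n → ℂ) × ℂ => Q q.1 q.2.1 q.2.2) q (a, v)) =
      fderiv ℂ (fun q : (Fin n → ℂ) × (Fin n → ℂ) × ℂ => Q' q.1 q.2.1 q.2.2)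
        (f q.1 (Q q.1 q.2.1 q.2.2), ft q.2.1 q.2.2, gt q.2.1 q.2.2)
        (fderiv ℂ (fun q : (Fin n → ℂ) × ℂ => f q.1 q.2) (q.1, Q q.1 q.2.1 q.2.2)
          (a, fderiv ℂ (fun q : (Fin n → ℂ) × (Fin n → ℂ) × ℂ => Q q.1 q.2.1 q.2.2) q (a, v)),
        fderiv ℂ (fun q : (Fin n → ℂ) × ℂ => ft q.1 q.2) q.2 v,
        fderiv ℂ (fun q : (Fin n → ℂ) × ℂ => gt q.1 q.2) q.2 v))
    (hinj : JacInjective f g (q.1, Q q.1 q.2.1 q.2.2)) : covec Q q.1 q.2 v = 0 := by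
  by_contra hc
  have hker := LinearMap.ker_ne_bot_of_finrank_lt
    (f := (fderiv ℂ (fun q : (Fin n → ℂ) × ℂ => f q.1 q.2) (q.1, Q q.1 q.2.1 q.2.2) :
      (Fin n → ℂ) × ℂ →ₗ[ℂ] Fin n → ℂ)) (by simp)
  obtain ⟨⟨a, b⟩, hab, hab0⟩ := Submodule.exists_mem_ne_zero_of_ne_bot hker
  replace hab : fderiv ℂ (fun q : (Fin n → ℂ) × ℂ => f q.1 q.2) (q.1, Q q.1 q.2.1 q.2.2) (a, b) = 0 :=
    hab
  set T := fderiv ℂ (fun q : (Fin n → ℂ) × (Fin n → ℂ) × ℂ => Q q.1 q.2.1 q.2.2) q with hT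
  have hs : T (a, ((b - T (a, 0)) / covec Q q.1 q.2 v) • v) = b := by
    rw [hT, fderiv_apply_eq_add hQ, map_smul, smul_eq_mul, div_mul_cancel₀ _ hc]
    ring
  have h1 := hd a (((b - T (a, 0)) / covec Q q.1 q.2 v) • v)
  rw [hs, hab, map_smul, map_smul, hv, hv', smul_zero, smul_zero] at h1
  exact hab0 (hinj _ hab (h1.trans (map_zero _)))

theorem eventually_exists_ne_zero_of_covec {r : ℝ}
    (ha : AnalyticOnNhd ℂ (fun q : (Fin n → ℂ) × (Fin n → ℂ) × ℂ => Q q.1 q.2.1 q.2.2)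
      (Metric.ball 0 r))
    {t : Finset (Fin n → ℂ)} (ht : ∀ z ∈ t, (z, 0) ∈ Metric.ball (0 : (Fin n → ℂ) × (Fin n → ℂ) × ℂ) r)
    (hker : ∀ v, (∀ z ∈ t, covec Q z 0 v = 0) → v = 0) :
    ∀ᶠ p in 𝓝[≠] (0 : (Fin n → ℂ) × ℂ), ∃ z ∈ t, Q z p.1 p.2 ≠ 0 := by
  have hd : HasFDerivAt (fun (p : (Fin n → ℂ) × ℂ) (z : t) => Q z p.1 p.2)
      (ContinuousLinearMap.pi fun z : t => covec Q z 0) 0 :=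
    hasFDerivAt_pi.2 fun z => hasFDerivAt_covec (ha _ (ht z z.2))
  have hinj : Function.Injective (ContinuousLinearMap.pi fun z : t => covec Q z 0) :=
    (injective_iff_map_eq_zero _).2 fun v hv => hker v fun z hz => congrFun hv ⟨z, hz⟩
  filter_upwards [hd.eventually_ne (c := 0)
    (((LinearMap.injective_iff_antilipschitz (ContinuousLinearMap.pi fun z : t => covec Q z 0).toLinearMap).1
      hinj).imp fun _ h => h.2)] with p hp
  by_contra! hcon
  exact hp (funext fun z => hcon z z.2)

theorem IsHSPM.det_jacFull_ne_zero (hn : 1 ≤ n) (hQ : IsNormalDF Q) (hnd : SegreNondeg Q)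
    (hQ' : IsNormalDF Q') (h : IsHSPM Q Q' f g ft gt)
    (hne : ¬ ∀ᶠ p in 𝓝 (0 : (Fin n → ℂ) × ℂ), g p.1 p.2 = 0)
    (hdet : ¬ ∀ᶠ z in 𝓝 0, (jacz f z).det = 0) : (jacFull ft gt 0).det ≠ 0 := by
  intro hdet0
  have hc1 : ContinuousAt (fun q : (Fin n → ℂ) × (Fin n → ℂ) × ℂ => (q.1, Q q.1 q.2.1 q.2.2)) 0 :=
    continuousAt_fst.prodMk hQ.analyticAt.continuousAt
  have hc10 : (fun q : (Fin n → ℂ) × (Fin n → ℂ) × ℂ => (q.1, Q q.1 q.2.1 q.2.2)) 0 = 0 :=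
    Prod.ext rfl hQ.apply_zero
  obtain ⟨r, hr, hb⟩ := Metric.eventually_nhds_iff_ball.1 (hQ.1.and ((h.eventually_fderiv hQ hQ').and
    ((eventually_comp_zero hc1 hc10 h.1).and (eventually_comp_zero hc1 hc10 h.2.1))))
  obtain ⟨s, hs, hQs⟩ := Metric.eventually_nhds_iff_ball.1 hQ.eventually_apply_zero
  obtain ⟨N, hNo, hNb, hNne, hN⟩ := exists_isOpen_jacInjective h.1.self_of_nhds h.2.1.self_of_nhds
    (h.eventually_g_zero hQ hQ') hne hdet (lt_min hr hs)
  have hNr : N ⊆ Metric.ball 0 r := hNb.trans (Metric.ball_subset_ball (min_le_left _ _))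
  have hQ0 : ∀ z ∈ N, Q z 0 0 = 0 := fun z hz =>
    hQs z (Metric.ball_subset_ball (min_le_right _ _) (hNb hz))
  have hQa : AnalyticOnNhd ℂ (fun q : (Fin n → ℂ) × (Fin n → ℂ) × ℂ => Q q.1 q.2.1 q.2.2)
      (Metric.ball 0 r) := fun q hq => (hb q hq).1
  obtain ⟨t, htN, ht⟩ := hnd.exists_finset hQ hr hQa hNo hNr hNne
  have hmem : ∀ z ∈ N, (z, (0 : (Fin n → ℂ) × ℂ)) ∈ Metric.ball (0 : (Fin n → ℂ) × (Fin n → ℂ) × ℂ) r :=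
    fun z hz => mk_mem_ball_zero (hNr hz) (Metric.mem_ball_self hr)
  have hQne := eventually_exists_ne_zero_of_covec hQa (fun z hz => hmem z (htN hz))
    ht.self_of_nhds
  have hJ : ∀ᶠ p in 𝓝 (0 : (Fin n → ℂ) × ℂ), ∀ z ∈ t, Q z p.1 p.2 ≠ 0 →
      JacInjective f g (z, Q z p.1 p.2) := by
    refine (Filter.eventually_all_finset t).2 fun z hz => ?_
    have hcz : ContinuousAt (fun p : (Fin n → ℂ) × ℂ => Q z p.1 p.2) 0 :=
      (hasFDerivAt_covec (hQa _ (hmem z (htN hz)))).continuousAt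
    exact eventually_comp_zero hcz (hQ0 z (htN hz))
      (eventually_nhdsWithin_iff.1 (hN z (htN hz)))
  have huv : LinearIndependent ℂ ![((Pi.single ⟨0, hn⟩ 1 : Fin n → ℂ), (0 : ℂ)),
      ((0 : Fin n → ℂ), (1 : ℂ))] := by
    refine LinearIndependent.pair_iff.2 fun a b hab => ⟨?_, ?_⟩
    · simpa using congrFun (congrArg Prod.fst hab) ⟨0, hn⟩
    · simpa using congrArg Prod.snd hab
  have hfreq := frequently_eq_zero_of_linearIndependent
    (analyticAt_det_jacFull h.2.2.1.self_of_nhds h.2.2.2.1.self_of_nhds) hdet0 huv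
  obtain ⟨p, hp0, ⟨⟨⟨z, hz, hzp⟩, hpJ, hpt⟩, hpr⟩, hft⟩ := (hfreq.and_eventually
    (((hQne.and (nhdsWithin_le_nhds (hJ.and ht))).and
      (nhdsWithin_le_nhds (Metric.ball_mem_nhds 0 hr))).and
        (nhdsWithin_le_nhds h.2.2.1))).exists
  obtain ⟨v, hv0, hv, hv'⟩ := exists_ker_of_det_jacFull_eq_zero hft.differentiableAt hp0
  have hm : ∀ z ∈ Metric.ball (0 : Fin n → ℂ) r, (z, p) ∈ Metric.ball 0 r := fun z hz =>
    mk_mem_ball_zero hz hpr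
  have hzr := hNr (htN hz)
  obtain ⟨-, -, hfz, hgz⟩ := hb _ (hm z hzr)
  have hnear : ∀ᶠ z' in 𝓝 z, covec Q z' p v = 0 := by
    have hcz : ContinuousAt (fun z' : Fin n → ℂ => (z', Q z' p.1 p.2)) z :=
      continuousAt_id.prodMk (ContinuousAt.comp (f := fun z' : Fin n → ℂ => (z', p))
        (hQa _ (hm z hzr)).continuousAt (by fun_prop))
    filter_upwards [hcz.eventually (JacInjective.eventually hfz hgz (hpJ z hz hzp)),
      Metric.isOpen_ball.mem_nhds hzr] with z' hz' hz'r
    exact covec_eq_zero_of_jacInjective (q := (z', p)) (hQa _ (hm z' hz'r)) hv hv'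
      (hb _ (hm z' hz'r)).2.1 hz'
  have hcov : AnalyticOnNhd ℂ (fun z => covec Q z p v) (Metric.ball 0 r) := fun z hz =>
    ((ContinuousLinearMap.apply ℂ ℂ v).analyticAt _).comp
      (AnalyticAt.comp_of_eq (f := fun z : Fin n → ℂ => (z, p)) (analyticAt_covec (hQa _ (hm z hz)))
        (analyticAt_id.prod analyticAt_const) rfl)
  have hall := hcov.eqOn_zero_of_preconnected_of_eventuallyEq_zero
    (convex_ball _ _).isPreconnected hzr hnear
  exact hv0 (hpt v fun z hz => hall (hNr (htN hz)))

end SegreMaps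

section Dichotomy

variable {Q Q' : (Fin n → ℂ) → (Fin n → ℂ) → ℂ → ℂ}
  {f ft : (Fin n → ℂ) → ℂ → Fin n → ℂ} {g gt : (Fin n → ℂ) → ℂ → ℂ}

theorem deriv_eq_fderiv {z : Fin n → ℂ} {w : ℂ}
    (h : DifferentiableAt ℂ (fun q : (Fin n → ℂ) × ℂ => g q.1 q.2) (z, w)) :
    deriv (fun w => g z w) w = fderiv ℂ (fun q : (Fin n → ℂ) × ℂ => g q.1 q.2) (z, w) (0, 1) :=
  (HasFDerivAt.comp_hasDerivAt (f := fun w : ℂ => (z, w)) w h.hasFDerivAt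
    ((hasDerivAt_const w _).prodMk (hasDerivAt_id w))).deriv

theorem IsHSPM.deriv_eq (hQ : IsNormalDF Q) (hQ' : IsNormalDF Q') (h : IsHSPM Q Q' f g ft gt) :
    deriv (fun w => g 0 w) 0 = deriv (fun τ => gt 0 τ) 0 := by
  have h1 := (h.eventually_covec hQ hQ').self_of_nhds (0, 1)
  rw [h.2.2.2.2.1, hQ.covec_zero_zero, hQ'.covec_zero_zero, mul_one] at h1
  rw [deriv_eq_fderiv h.2.1.self_of_nhds.differentiableAt,
    deriv_eq_fderiv h.2.2.2.1.self_of_nhds.differentiableAt]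
  exact h1

theorem IsHSPM.eventually_fderiv_slice (hQ : IsNormalDF Q) (hQ' : IsNormalDF Q')
    (h : IsHSPM Q Q' f g ft gt) (hgt : ∀ᶠ χ in 𝓝 0, gt χ 0 = 0) : ∀ᶠ z in 𝓝 0, ∀ v,
      fderiv ℂ (fun q : (Fin n → ℂ) × ℂ => g q.1 q.2) (z, 0) (0, 1) *
        fderiv ℂ (fun χ => Q z χ 0) 0 v =
      fderiv ℂ (fun χ => Q' (f z 0) χ 0) 0 (fderiv ℂ (fun χ => ft χ 0) 0 v) := by
  have hc : ContinuousAt (fun z : Fin n → ℂ => (z, (0 : Fin n → ℂ), (0 : ℂ))) 0 := by fun_prop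
  have hc1 : ContinuousAt (fun z : Fin n → ℂ => (z, (0 : ℂ))) 0 := by fun_prop
  have hcf : ContinuousAt (fun z : Fin n → ℂ => (f z 0, (0 : Fin n → ℂ), (0 : ℂ))) 0 :=
    (ContinuousAt.comp (f := fun z : Fin n → ℂ => (z, (0 : ℂ))) (x := 0)
      h.1.self_of_nhds.continuousAt hc1).prodMk continuousAt_const
  filter_upwards [h.eventually_covec hQ hQ', eventually_comp_zero hc rfl hQ.1,
    eventually_comp_zero hcf (by simp [h.2.2.2.2.1]) hQ'.1] with z h1 h2 h3 v
  have h4 : (fun χ => gt χ 0) =ᶠ[𝓝 0] fun _ => 0 := hgt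
  have h5 := hasFDerivAt_slice (φ := gt) (z := 0) (w := 0) h.2.2.2.1.self_of_nhds.differentiableAt
  have h6 : fderiv ℂ (fun q : (Fin n → ℂ) × ℂ => gt q.1 q.2) 0 (v, 0) = 0 :=
    DFunLike.congr_fun (h5.unique (h4.hasFDerivAt_iff.2 (hasFDerivAt_const 0 0))) v
  rw [covec_slice h2, covec_slice h3, (hasFDerivAt_slice (φ := ft) (z := 0) (w := 0)
    h.2.2.1.self_of_nhds.differentiableAt).fderiv]
  have h7 := h1 (v, 0)
  rw [h6] at h7
  exact h7

theorem eventually_fderiv_ne_zero (hg : AnalyticAt ℂ (fun q : (Fin n → ℂ) × ℂ => g q.1 q.2) 0)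
    (h : deriv (fun w => g 0 w) 0 ≠ 0) :
    ∀ᶠ z in 𝓝 0, fderiv ℂ (fun q : (Fin n → ℂ) × ℂ => g q.1 q.2) (z, 0) (0, 1) ≠ 0 := by
  rw [deriv_eq_fderiv hg.differentiableAt] at h
  have hc : ContinuousAt
      (fun z : Fin n → ℂ => fderiv ℂ (fun q : (Fin n → ℂ) × ℂ => g q.1 q.2) (z, 0)) 0 :=
    ContinuousAt.comp (f := fun z : Fin n → ℂ => (z, (0 : ℂ))) (x := 0) hg.fderiv.continuousAt
      (by fun_prop)
  exact (hc.clm_apply continuousAt_const).eventually_ne h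

theorem differentiableAt_slice_zero
    (hf : AnalyticAt ℂ (fun q : (Fin n → ℂ) × ℂ => f q.1 q.2) 0) :
    DifferentiableAt ℂ (fun z => f z 0) 0 :=
  (hasFDerivAt_slice (φ := f) (z := 0) (w := 0) hf.differentiableAt).differentiableAt

theorem IsHSPM.det_jacz_ne_zero (hQ : IsNormalDF Q) (hnd : SegreNondeg Q) (hQ' : IsNormalDF Q')
    (h : IsHSPM Q Q' f g ft gt) (hgt : ∀ᶠ χ in 𝓝 0, gt χ 0 = 0)
    (hg : deriv (fun w => g 0 w) 0 ≠ 0) : (jacz ft 0).det ≠ 0 := by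
  intro h0
  obtain ⟨v, hv0, hv⟩ := Matrix.exists_mulVec_eq_zero_iff.2 h0
  rw [jacz_mulVec (differentiableAt_slice_zero h.2.2.1.self_of_nhds)] at hv
  refine hv0 (hnd v ?_)
  filter_upwards [h.eventually_fderiv_slice hQ hQ' hgt,
    eventually_fderiv_ne_zero h.2.1.self_of_nhds hg] with z h1 h2
  have h3 := h1 v
  rw [hv, map_zero] at h3
  exact (mul_eq_zero.1 h3).resolve_left h2

theorem IsHSPM.segreNondeg_target (hQ : IsNormalDF Q) (hnd : SegreNondeg Q) (hQ' : IsNormalDF Q')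
    (h : IsHSPM Q Q' f g ft gt) (hgt : ∀ᶠ χ in 𝓝 0, gt χ 0 = 0)
    (hg : deriv (fun w => g 0 w) 0 ≠ 0) (hdet : (jacz ft 0).det ≠ 0) : SegreNondeg Q' := by
  intro u hu
  obtain ⟨v, rfl⟩ : ∃ v, fderiv ℂ (fun χ => ft χ 0) 0 v = u := by
    refine ⟨((jacz ft 0)⁻¹).mulVec u, ?_⟩
    rw [← jacz_mulVec (differentiableAt_slice_zero h.2.2.1.self_of_nhds), Matrix.mulVec_mulVec,
      Matrix.mul_nonsing_inv _ (isUnit_iff_ne_zero.2 hdet), Matrix.one_mulVec]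
  suffices v = 0 by rw [this, map_zero]
  refine hnd v ?_
  filter_upwards [h.eventually_fderiv_slice hQ hQ' hgt,
    eventually_fderiv_ne_zero h.2.1.self_of_nhds hg,
    eventually_comp_zero (differentiableAt_slice_zero h.1.self_of_nhds).continuousAt
      h.2.2.2.2.1 hu] with z h1 h2 h3
  have h4 := h1 v
  rw [h3] at h4
  exact (mul_eq_zero.1 h4).resolve_left h2

end Dichotomy

/-- Theorem 1.4: if `M` is finitely nondegenerate at `0`, then either `ℋ` is
transversally null with `Q'(f, f̃, 0) ≡ 0`, or `∂g/∂w(0) ≠ 0`, `det f_z(0) ≠ 0`,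
`det f̃_χ(0) ≠ 0` (so `ℋ` is a biholomorphism near `0`) and `M'` is finitely nondegenerate. -/
theorem statement3 (n : ℕ) (hn : 1 ≤ n)
    (Q Q' : (Fin n → ℂ) → (Fin n → ℂ) → ℂ → ℂ)
    (hQ : IsRealNormalDF Q) (hQ' : IsRealNormalDF Q')
    (hM : FinNondeg Q)
    (f ft : (Fin n → ℂ) → ℂ → Fin n → ℂ) (g gt : (Fin n → ℂ) → ℂ → ℂ)
    (hH : IsHSPM Q Q' f g ft gt) :
    (TransversallyNull g gt ∧
      ∀ᶠ p in 𝓝 (0 : ((Fin n → ℂ) × ℂ) × ((Fin n → ℂ) × ℂ)),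
        Q' (f p.1.1 p.1.2) (ft p.2.1 p.2.2) 0 = 0) ∨
    (SegreTransversal g ∧ (jacz f 0).det ≠ 0 ∧ (jacz ft 0).det ≠ 0 ∧
      (jacFull f g 0).det ≠ 0 ∧ (jacFull ft gt 0).det ≠ 0 ∧
      FinNondeg Q') := by
  have hnd := hM.segreNondeg hQ.1
  have hnd' := hnd.qBar hQ
  have hB := hQ.isNormalDF_qBar
  have hB' := hQ'.isNormalDF_qBar
  have hD := hH.dual hQ hQ'
  have hg0 := hH.eventually_g_zero hQ.1 hQ'.1
  have hgt0 := hD.eventually_g_zero hB hB'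
  by_cases hgt : ∀ᶠ p in 𝓝 (0 : (Fin n → ℂ) × ℂ), gt p.1 p.2 = 0
  · obtain ⟨hg, hQf⟩ := hH.null_of_gt_eq_zero hQ.1 hnd hQ'.1 hgt
    have hc : ContinuousAt (fun p : ((Fin n → ℂ) × ℂ) × ((Fin n → ℂ) × ℂ) =>
      (p.1.1, p.1.2, p.2.1, p.2.2)) 0 := by fun_prop
    exact Or.inl ⟨⟨hg, hgt⟩, eventually_comp_zero hc rfl hQf⟩
  · have hg : ¬ ∀ᶠ p in 𝓝 (0 : (Fin n → ℂ) × ℂ), g p.1 p.2 = 0 := fun hg =>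
      hgt (hD.null_of_gt_eq_zero hB hnd' hB' hg).1
    have hdet : ¬ ∀ᶠ z in 𝓝 0, (jacz f z).det = 0 := fun hdet =>
      hgt (hD.g_eq_zero_of_det hB hnd' hB' hg0 hdet)
    have hfull := hH.det_jacFull_ne_zero hn hQ.1 hnd hQ'.1 hg hdet
    have hfull' := hfull
    rw [det_jacFull_zero hH.2.2.1.self_of_nhds.differentiableAt
      hH.2.2.2.1.self_of_nhds.differentiableAt hgt0] at hfull'
    obtain ⟨hft, hgtd⟩ := mul_ne_zero_iff.1 hfull'
    have hgd : deriv (fun w => g 0 w) 0 ≠ 0 := hH.deriv_eq hQ.1 hQ'.1 ▸ hgtd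
    have hfz := hD.det_jacz_ne_zero hB hnd' hB' hg0 hgtd
    refine Or.inr ⟨hgd, hfz, hft, ?_, hfull,
      (hH.segreNondeg_target hQ.1 hnd hQ'.1 hgt0 hgd hft).finNondeg hQ'.1⟩
    rw [det_jacFull_zero hH.1.self_of_nhds.differentiableAt hH.2.1.self_of_nhds.differentiableAt hg0]
    exact mul_ne_zero hfz hgd

end HSPMpaper
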